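/- arXiv:1610.05740 — 2 statements merged into one kernel-verified Lean document; each statement's English description precedes it below -/
import Mathlib

section
/- Fix u₀ ∈ (0,1). For a function F : ℝ → ℝ, the following are equivalent: (1) F applied entrywise maps M({−1,−u₀}) into M((−∞,0]) and maps M₄({−1,0}) together with M₄({−u}) for every u ∈ (0,1) into M₄((−∞,0]); (2) F applied entrywise maps M([−1,0]) into itself; (3) there exists an absolutely monotonic entire function F̃ such that F(x) = F̃(x) for x > 0, F(0) = 0, and F(x) = −F̃(−x) for x < 0 (in particular F is odd, but may be discontinuous at 0). -/
open MeasureTheory Filter Set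
open scoped ENNReal

/-- An admissible measure: a non-negative Borel measure on `ℝ` all of whose absolute
moments are finite. -/
def IsAdmissible (μ : Measure ℝ) : Prop := ∀ k : ℕ, Integrable (fun x => x ^ k) μ

/-- The `k`-th power moment of a measure. -/
noncomputable def moment (μ : Measure ℝ) (k : ℕ) : ℝ := ∫ x, x ^ k ∂μ

/-- `momentSet K` is the set of moment sequences of admissible measures supported in `K`. -/
def momentSet (K : Set ℝ) : Set (ℕ → ℝ) :=
  {s | ∃ μ : Measure ℝ, IsAdmissible μ ∧ μ Kᶜ = 0 ∧ ∀ k, s k = moment μ k}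

/-- An absolutely monotonic entire function: a power series with non-negative
coefficients converging at every real point. -/
def AbsolutelyMonotonicEntire (G : ℝ → ℝ) : Prop :=
  ∃ c : ℕ → ℝ, (∀ n, 0 ≤ c n) ∧ ∀ x : ℝ, HasSum (fun n => c n * x ^ n) (G x)

/-- `truncMomentSet n K` is the set of truncated moment sequences `(s₀(μ), …, sₙ(μ))`
of admissible measures supported in `K`. -/
def truncMomentSet (n : ℕ) (K : Set ℝ) : Set (Fin (n + 1) → ℝ) :=
  {s | ∃ μ : Measure ℝ, IsAdmissible μ ∧ μ Kᶜ = 0 ∧ ∀ k : Fin (n + 1), s k = moment μ k}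

/-!
The image under `F` of the moments of `a δ₋₁ + b δ₀` comes from a measure on `(-∞, 0]` with equal
first and third and equal second and fourth moments. Integrating `-x (1 + x)²` and `x² (1 + x)²`
shows that its first moment is minus the second, so `F` is odd, and integrating `(1 + x)²` shows
that `F` is monotone. After the reflection `x ↦ -x`, the sequences `F (a + b u₀ ^ k)` are positive.
If `F` is smooth, pairing such a sequence with the polynomial `∏ j < n, (x - u₀ ^ j)²` and letting
`b → 0⁺` isolates the `n`-th derivative of `F` at `a` up to a positive factor, so `F` is absolutely
monotone on `[0, ∞)` and hence, by Bernstein's theorem, given there by an entire series with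
nonnegative coefficients. A monotone `F` is a limit of mollifications with the same positivity;
averaging to the right identifies the limit with the right limits of `F`.

Conversely, on a multiplicative submonoid of `ℝ`, products of moment sequences are moment sequences
of multiplicative convolutions, so power series with nonnegative coefficients preserve moment
sequences. A vanishing moment on `[0, 1]` forces the measure to be a multiple of `δ₀`, which
handles a discontinuity of `F` at `0`.
-/

open Polynomial
open scoped Topology Convolution ContDiff Nat Pointwise

/-! ### Moment sequences -/

section Moments

variable {μ : Measure ℝ} {K L : Set ℝ} {s t : ℕ → ℝ}

theorem IsAdmissible.isFiniteMeasure (hμ : IsAdmissible μ) : IsFiniteMeasure μ := by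
  have integrable_one : Integrable (fun _ => (1 : ℝ)) μ := by simpa only [pow_zero] using hμ 0
  exact (integrable_const_iff_isFiniteMeasure one_ne_zero).1 integrable_one

theorem isAdmissible_of_integrable_even_pow (h : ∀ k : ℕ, Integrable (fun x => x ^ (2 * k)) μ) :
    IsAdmissible μ := by
  intro k
  have integrable_one_add : Integrable (fun x => 1 + x ^ (2 * k)) μ := by
    simpa [Pi.add_def] using (h 0).add (h k)
  refine integrable_one_add.mono' (by fun_prop) (Eventually.of_forall fun x => ?_)
  rw [Real.norm_eq_abs, mul_comm, pow_mul]
  exact abs_le.2 ⟨by nlinarith [sq_nonneg (x ^ k + 1)], by nlinarith [sq_nonneg (x ^ k - 1)]⟩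

theorem isAdmissible_dirac (x : ℝ) : IsAdmissible (Measure.dirac x) :=
  fun _ => integrable_dirac (by simp)

theorem moment_dirac (x : ℝ) (k : ℕ) : moment (Measure.dirac x) k = x ^ k := by
  simp [moment]

theorem momentSet_mono (h : K ⊆ L) : momentSet K ⊆ momentSet L := by
  rintro s ⟨μ, hμ, hK, hs⟩
  exact ⟨μ, hμ, measure_mono_null (compl_subset_compl.2 h) hK, hs⟩

theorem geometric_mem_momentSet {x : ℝ} (hx : x ∈ K) : (fun k => x ^ k) ∈ momentSet K :=
  ⟨Measure.dirac x, isAdmissible_dirac x, by simp [hx], fun k => (moment_dirac x k).symm⟩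

theorem smul_mem_momentSet {c : ℝ} (hc : 0 ≤ c) (hs : s ∈ momentSet K) : c • s ∈ momentSet K := by
  obtain ⟨μ, hμ, hK, hs⟩ := hs
  refine ⟨ENNReal.ofReal c • μ, fun k => (hμ k).smul_measure ENNReal.ofReal_ne_top,
    by simp [hK], fun k => ?_⟩
  simp [moment, integral_smul_measure, hc, hs]

theorem add_mem_momentSet (hs : s ∈ momentSet K) (ht : t ∈ momentSet K) :
    s + t ∈ momentSet K := by
  obtain ⟨μ, hμ, hμK, hs⟩ := hs
  obtain ⟨ν, hν, hνK, ht⟩ := ht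
  refine ⟨μ + ν, fun k => (hμ k).add_measure (hν k), by simp [hμK, hνK], fun k => ?_⟩
  rw [Pi.add_apply, hs, ht, moment, moment, moment, integral_add_measure (hμ k) (hν k)]

theorem neg_one_pow_mul_mem_momentSet (hs : s ∈ momentSet K) :
    (fun k => (-1) ^ k * s k) ∈ momentSet (-K) := by
  obtain ⟨μ, hμ, hK, hs⟩ := hs
  have neg_pow_eq (k : ℕ) : (fun x : ℝ => (MeasurableEquiv.neg ℝ x) ^ k) =
      fun x => (-1) ^ k * x ^ k := funext fun x => neg_pow x k
  refine ⟨μ.map (MeasurableEquiv.neg ℝ), fun k => ?_, ?_, fun k => ?_⟩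
  · rw [integrable_map_equiv, Function.comp_def, neg_pow_eq]
    exact (hμ k).const_mul _
  · rw [MeasurableEquiv.map_apply]
    exact measure_mono_null (fun x hx => by simpa using hx) hK
  · rw [moment, integral_map_equiv, neg_pow_eq, integral_const_mul]
    exact congrArg _ (hs k)

theorem mul_mem_momentSet {M : Submonoid ℝ} (hM : MeasurableSet (M : Set ℝ))
    (hs : s ∈ momentSet M) (ht : t ∈ momentSet M) : s * t ∈ momentSet M := by
  obtain ⟨μ, hμ, hμM, hs⟩ := hs
  obtain ⟨ν, hν, hνM, ht⟩ := ht
  have := hμ.isFiniteMeasure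
  have := hν.isFiniteMeasure
  have integrable_mul_pow (k : ℕ) : Integrable (fun q : ℝ × ℝ => (q.1 * q.2) ^ k) (μ.prod ν) := by
    simpa only [mul_pow] using (hμ k).mul_prod (hν k)
  have ae_mem_mul : ∀ᵐ q ∂μ.prod ν, q.1 * q.2 ∈ (M : Set ℝ) := by
    filter_upwards [Measure.quasiMeasurePreserving_fst.ae (mem_ae_iff.2 hμM),
      Measure.quasiMeasurePreserving_snd.ae (mem_ae_iff.2 hνM)] with q hq₁ hq₂
    exact M.mul_mem hq₁ hq₂
  refine ⟨μ ∗ₘ ν, fun k => ?_, ?_, fun k => ?_⟩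
  · exact (integrable_map_measure (by fun_prop) (by fun_prop)).2 (integrable_mul_pow k)
  · exact mem_ae_iff.1 ((ae_map_iff (by fun_prop) hM).2 ae_mem_mul)
  · rw [moment, Measure.mconv, integral_map (by fun_prop) (by fun_prop), Pi.mul_apply, hs, ht]
    simp only [mul_pow]
    exact (integral_prod_mul (fun x : ℝ => x ^ k) (fun x : ℝ => x ^ k)).symm

theorem pow_mem_momentSet {M : Submonoid ℝ} (hM : MeasurableSet (M : Set ℝ))
    (hs : s ∈ momentSet M) (n : ℕ) : s ^ n ∈ momentSet M := by
  induction n with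
  | zero => simpa [Pi.one_def] using geometric_mem_momentSet M.one_mem
  | succ n ih => exact pow_succ s n ▸ mul_mem_momentSet hM ih hs

theorem hasSum_mem_momentSet {ι : Type*} [Countable ι] {t : ι → ℕ → ℝ}
    (ht : ∀ i, t i ∈ momentSet K) (hs : HasSum t s) : s ∈ momentSet K := by
  rw [Pi.hasSum] at hs
  choose μ hμ hμK ht using ht
  have integrable_even_pow (k : ℕ) : Integrable (fun x => x ^ (2 * k)) (Measure.sum μ) := by
    refine integrable_sum_measure (fun i => hμ i _) ((hs (2 * k)).summable.congr fun i => ?_)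
    simp only [ht, moment, Real.norm_of_nonneg ((even_two_mul k).pow_nonneg _)]
  have admissible_sum := isAdmissible_of_integrable_even_pow integrable_even_pow
  refine ⟨Measure.sum μ, admissible_sum, ?_, fun k => ?_⟩
  · exact mem_ae_iff.1 (Measure.ae_sum_iff.2 fun i => mem_ae_iff.2 (hμK i))
  · refine (hs k).unique ?_
    simp only [ht]
    exact hasSum_integral_measure (admissible_sum k)

theorem AbsolutelyMonotonicEntire.comp_mem_momentSet {G : ℝ → ℝ}
    (hG : AbsolutelyMonotonicEntire G) {M : Submonoid ℝ} (hM : MeasurableSet (M : Set ℝ))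
    (hs : s ∈ momentSet M) : (fun k => G (s k)) ∈ momentSet M := by
  obtain ⟨c, hc, hG⟩ := hG
  exact hasSum_mem_momentSet
    (fun n => smul_mem_momentSet (hc n) (pow_mem_momentSet hM hs n))
    (Pi.hasSum.2 fun k => hG (s k))

theorem nonneg_of_mem_momentSet_Ici (hs : s ∈ momentSet (Ici 0)) (k : ℕ) : 0 ≤ s k := by
  obtain ⟨μ, -, hK, hs⟩ := hs
  rw [hs]
  refine integral_nonneg_of_ae ?_
  filter_upwards [mem_ae_iff.2 hK] with x hx using pow_nonneg hx k

theorem eq_zero_of_mem_momentSet_Ici (hs : s ∈ momentSet (Ici 0)) {j k : ℕ} (hj : s j = 0)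
    (hk : k ≠ 0) : s k = 0 := by
  obtain ⟨μ, hμ, hK, hs⟩ := hs
  have pow_nonneg_ae : 0 ≤ᵐ[μ] fun x => x ^ j := by
    filter_upwards [mem_ae_iff.2 hK] with x hx using pow_nonneg hx j
  rw [hs, moment, integral_eq_zero_iff_of_nonneg_ae pow_nonneg_ae (hμ j)] at hj
  rw [hs]
  refine integral_eq_zero_of_ae ?_
  filter_upwards [hj] with x hx
  simp [eq_zero_of_pow_eq_zero hx, hk]

theorem mem_truncMomentSet_iff {n : ℕ} {s : Fin (n + 1) → ℝ} :
    s ∈ truncMomentSet n K ↔ ∃ t ∈ momentSet K, ∀ k : Fin (n + 1), s k = t k := by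
  constructor
  · rintro ⟨μ, hμ, hK, hs⟩
    exact ⟨moment μ, ⟨μ, hμ, hK, fun _ => rfl⟩, hs⟩
  · rintro ⟨t, ⟨μ, hμ, hK, ht⟩, hs⟩
    exact ⟨μ, hμ, hK, fun k => (hs k).trans (ht k)⟩

theorem comp_mem_truncMomentSet {F : ℝ → ℝ}
    (h : ∀ s ∈ momentSet K, (fun k => F (s k)) ∈ momentSet L) {n : ℕ} :
    ∀ s ∈ truncMomentSet n K, (fun k => F (s k)) ∈ truncMomentSet n L := by
  intro s hs
  obtain ⟨t, ht, hs⟩ := mem_truncMomentSet_iff.1 hs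
  exact mem_truncMomentSet_iff.2 ⟨_, h t ht, fun k => congrArg F (hs k)⟩

end Moments

/-! ### Absolutely monotone functions -/

section AbsolutelyMonotone

theorem exists_absolutelyMonotonicEntire_eqOn_of_hasSum {g : ℝ → ℝ} {c : ℕ → ℝ} (hc : ∀ n, 0 ≤ c n)
    (hg : ∀ x ≥ 0, HasSum (fun n => c n * x ^ n) (g x)) :
    ∃ G, AbsolutelyMonotonicEntire G ∧ EqOn g G (Ici 0) := by
  have summable_pow (x : ℝ) : Summable fun n => c n * x ^ n := by
    refine Summable.of_norm ((hg |x| (abs_nonneg x)).summable.congr fun n => ?_)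
    rw [norm_mul, norm_pow, Real.norm_eq_abs, Real.norm_eq_abs, abs_of_nonneg (hc n)]
  exact ⟨fun x => ∑' n, c n * x ^ n, ⟨c, hc, fun x => (summable_pow x).hasSum⟩,
    fun x hx => (hg x hx).tsum_eq.symm⟩

theorem AbsolutelyMonotonicEntire.nonneg {G : ℝ → ℝ} (hG : AbsolutelyMonotonicEntire G)
    {x : ℝ} (hx : 0 ≤ x) : 0 ≤ G x := by
  obtain ⟨c, hc, hG⟩ := hG
  exact (hG x).nonneg fun n => mul_nonneg (hc n) (pow_nonneg hx n)

theorem AbsolutelyMonotonicEntire.continuous {G : ℝ → ℝ} (hG : AbsolutelyMonotonicEntire G) :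
    Continuous G := by
  obtain ⟨c, hc, hG⟩ := hG
  obtain rfl : G = fun x => ∑' n, c n * x ^ n := funext fun x => (hG x).tsum_eq.symm
  refine continuous_iff_continuousAt.2 fun x => ?_
  refine (continuousOn_tsum (fun n => by fun_prop) (hG (|x| + 1)).summable
    fun n y hy => ?_).continuousAt (Metric.closedBall_mem_nhds x one_pos)
  have abs_le : |y| ≤ |x| + 1 := by
    have := abs_sub_abs_le_abs_sub y x
    rw [Metric.mem_closedBall, Real.dist_eq] at hy
    linarith
  rw [norm_mul, norm_pow, Real.norm_eq_abs, Real.norm_eq_abs, abs_of_nonneg (hc n)]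
  exact mul_le_mul_of_nonneg_left (pow_le_pow_left₀ (abs_nonneg y) abs_le n) (hc n)

theorem norm_mul_pow_le_of_mul_pow_le {c B x R : ℝ} {n : ℕ} (hc : 0 ≤ c) (hx : 0 ≤ x)
    (hR : 0 < R) (h : c * R ^ n ≤ B) : ‖c * x ^ n‖ ≤ B * (x / R) ^ n := by
  rw [Real.norm_of_nonneg (by positivity)]
  calc c * x ^ n = c * R ^ n * (x / R) ^ n := by rw [div_pow]; field_simp
    _ ≤ B * (x / R) ^ n := by gcongr

theorem exists_ultrafilter_tendsto_of_eventually_mem_Icc {ι α : Type*} {l : Filter ι} [l.NeBot]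
    {c : ι → α → ℝ} {lo hi : α → ℝ} (hc : ∀ n, ∀ᶠ i in l, c i n ∈ Icc (lo n) (hi n)) :
    ∃ U : Ultrafilter ι, ↑U ≤ l ∧ ∃ d : α → ℝ, ∀ n, Tendsto (fun i => c i n) U (𝓝 (d n)) := by
  refine ⟨Ultrafilter.of l, Ultrafilter.of_le l, ?_⟩
  have exists_limit (n : α) : ∃ d, Tendsto (fun i => c i n) (Ultrafilter.of l) (𝓝 d) := by
    obtain ⟨d, -, hd⟩ := (isCompact_Icc (a := lo n) (b := hi n)).ultrafilter_le_nhds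
      ((Ultrafilter.of l).map fun i => c i n)
      (le_principal_iff.2 (Ultrafilter.of_le l (hc n)))
    exact ⟨d, hd⟩
  choose d hd using exists_limit
  exact ⟨d, hd⟩

/- The values at `x + 1` dominate the power series at `x` by a geometric series, so coefficientwise
limits along an ultrafilter pass through the sum. -/
theorem AbsolutelyMonotonicEntire.exists_eqOn_of_tendsto {ι : Type*} {l : Filter ι} [l.NeBot]
    {f : ι → ℝ → ℝ} {g : ℝ → ℝ} (hf : ∀ i, AbsolutelyMonotonicEntire (f i))
    (hlim : ∀ x ≥ 0, Tendsto (fun i => f i x) l (𝓝 (g x))) :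
    ∃ G, AbsolutelyMonotonicEntire G ∧ EqOn g G (Ici 0) := by
  choose c hc hf using hf
  have eventually_term_le {x : ℝ} (hx : 0 ≤ x) : ∀ᶠ i in l, ∀ n, c i n * x ^ n ≤ g x + 1 := by
    filter_upwards [(hlim x hx).eventually_le_const (lt_add_one (g x))] with i hi n
    exact (le_hasSum (hf i x) n fun j _ => mul_nonneg (hc i j) (pow_nonneg hx j)).trans hi
  have eventually_coeff_mem (n : ℕ) : ∀ᶠ i in l, c i n ∈ Icc 0 (g 1 + 1) := by
    filter_upwards [eventually_term_le zero_le_one] with i hi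
    exact ⟨hc i n, by simpa using hi n⟩
  obtain ⟨U, hU, d, hd⟩ := exists_ultrafilter_tendsto_of_eventually_mem_Icc eventually_coeff_mem
  refine exists_absolutelyMonotonicEntire_eqOn_of_hasSum (c := d)
    (fun n => ge_of_tendsto' (hd n) fun i => hc i n) fun x hx => ?_
  have summable_bound : Summable fun n => (g (x + 1) + 1) * (x / (x + 1)) ^ n :=
    (summable_geometric_of_lt_one (by positivity)
      ((div_lt_one (by positivity)).2 (lt_add_one x))).mul_left _
  have eventually_norm_le :
      ∀ᶠ i in U, ∀ n, ‖c i n * x ^ n‖ ≤ (g (x + 1) + 1) * (x / (x + 1)) ^ n := by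
    filter_upwards [hU (eventually_term_le (by positivity : 0 ≤ x + 1))] with i hi n
    exact norm_mul_pow_le_of_mul_pow_le (hc i n) hx (by positivity) (hi n)
  have tendsto_term (n : ℕ) : Tendsto (fun i => c i n * x ^ n) U (𝓝 (d n * x ^ n)) :=
    (hd n).mul_const _
  have summable_limit : Summable fun n => d n * x ^ n :=
    .of_norm_bounded summable_bound fun n =>
      le_of_tendsto (tendsto_term n).norm (eventually_norm_le.mono fun i hi => hi n)
  have tendsto_tsum : Tendsto (fun i => f i x) U (𝓝 (∑' n, d n * x ^ n)) :=
    (tendsto_tsum_of_dominated_convergence summable_bound tendsto_term eventually_norm_le).congr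
      fun i => (hf i x).tsum_eq
  rw [tendsto_nhds_unique ((hlim x hx).mono_left hU) tendsto_tsum]
  exact summable_limit.hasSum

theorem exists_taylor_lagrange {f : ℝ → ℝ} {S : Set ℝ} {n : ℕ} (hf : ContDiffOn ℝ n f S)
    (hS : UniqueDiffOn ℝ S) {x y : ℝ} (hxy : x < y) (hsub : Icc x y ⊆ S) :
    ∃ ξ ∈ Icc x y, f y = ∑ k ∈ Finset.range n, iteratedDerivWithin k f S x / k ! * (y - x) ^ k +
      iteratedDerivWithin n f S ξ / n ! * (y - x) ^ n := by
  rcases n with _ | n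
  · exact ⟨y, right_mem_Icc.2 hxy.le, by simp⟩
  have hI : uIcc x y = Icc x y := uIcc_of_le hxy.le
  have hu : UniqueDiffOn ℝ (Icc x y) := uniqueDiffOn_Icc hxy
  have within_eq {k : ℕ} (hk : k ≤ n + 1) {z : ℝ} (hz : z ∈ Icc x y) :
      iteratedDerivWithin k f (Icc x y) z = iteratedDerivWithin k f S z := by
    rw [iteratedDerivWithin, iteratedDerivWithin, iteratedFDerivWithin_subset hsub hu hS
      (hf.of_le (by exact_mod_cast hk)) hz]
  have hfI : ContDiffOn ℝ (n + 1) f (Icc x y) := hf.mono hsub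
  obtain ⟨ξ, hξ, h⟩ := taylor_mean_remainder_lagrange (n := n) hxy.ne (hI ▸ hfI.of_succ)
    (hI ▸ (hfI.differentiableOn_iteratedDerivWithin (by norm_cast; simp) hu).mono
      (uIoo_of_le hxy.le ▸ Ioo_subset_Icc_self))
  have hξ : ξ ∈ Icc x y := Ioo_subset_Icc_self (uIoo_of_le hxy.le ▸ hξ)
  refine ⟨ξ, hξ, ?_⟩
  rw [hI, within_eq le_rfl hξ, taylor_within_apply, sub_eq_iff_eq_add'] at h
  rw [h, mul_div_right_comm]
  congr 1
  refine Finset.sum_congr rfl fun k hk => ?_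
  rw [within_eq (Finset.mem_range.1 hk).le (left_mem_Icc.2 hxy.le), smul_eq_mul]
  ring

section Bernstein

variable {f : ℝ → ℝ} {a x y : ℝ}

theorem monotoneOn_iteratedDerivWithin (hf : AbsolutelyMonotoneOn f (Ici a)) (n : ℕ) :
    MonotoneOn (iteratedDerivWithin n f (Ici a)) (Ici a) := by
  have hdiff : DifferentiableOn ℝ (iteratedDerivWithin n f (Ici a)) (Ici a) :=
    hf.contDiffOn.differentiableOn_iteratedDerivWithin (by exact_mod_cast WithTop.coe_lt_top n)
      (uniqueDiffOn_Ici a)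
  refine monotoneOn_of_hasDerivWithinAt_nonneg (convex_Ici a) hdiff.continuousOn
    (f' := iteratedDerivWithin (n + 1) f (Ici a)) (fun z hz => ?_) fun z hz =>
      hf.iteratedDerivWithin_nonneg (uniqueDiffOn_Ici a) _ (interior_subset hz)
  rw [iteratedDerivWithin_succ]
  exact (hdiff z (interior_subset hz)).hasDerivWithinAt.mono interior_subset

theorem iteratedDerivWithin_div_factorial_mul_pow_le (hf : AbsolutelyMonotoneOn f (Ici a))
    (hx : a ≤ x) (hxy : x < y) (n : ℕ) :
    iteratedDerivWithin n f (Ici a) x / n ! * (y - x) ^ n ≤ f y := by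
  have hsub : Icc x y ⊆ Ici a := fun z hz => hx.trans hz.1
  obtain ⟨ξ, hξ, taylor⟩ := exists_taylor_lagrange (n := n)
    (hf.contDiffOn.of_le (by exact_mod_cast le_top)) (uniqueDiffOn_Ici a) hxy hsub
  have taylor_terms_nonneg : 0 ≤ ∑ k ∈ Finset.range n,
      iteratedDerivWithin k f (Ici a) x / k ! * (y - x) ^ k :=
    Finset.sum_nonneg fun k _ => mul_nonneg
      (div_nonneg (hf.iteratedDerivWithin_nonneg (uniqueDiffOn_Ici a) k hx) (by positivity))
      (pow_nonneg (sub_nonneg.2 hxy.le) k)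
  calc iteratedDerivWithin n f (Ici a) x / n ! * (y - x) ^ n
      ≤ iteratedDerivWithin n f (Ici a) ξ / n ! * (y - x) ^ n := by
        have := sub_nonneg.2 hxy.le
        gcongr
        exact monotoneOn_iteratedDerivWithin hf n hx (hsub hξ) hξ.1
    _ ≤ f y := by linarith

theorem abs_sub_taylor_sum_le (hf : AbsolutelyMonotoneOn f (Ici a)) (hx : a < x) (n : ℕ) :
    |f x - ∑ k ∈ Finset.range n, iteratedDerivWithin k f (Ici a) a / k ! * (x - a) ^ k| ≤
      f (x + 2 * (x - a)) * (1 / 2) ^ n := by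
  obtain ⟨ξ, hξ, taylor⟩ := exists_taylor_lagrange (n := n)
    (hf.contDiffOn.of_le (by exact_mod_cast le_top)) (uniqueDiffOn_Ici a) hx Icc_subset_Ici_self
  have := sub_pos.2 hx
  have deriv_nonneg := hf.iteratedDerivWithin_nonneg (uniqueDiffOn_Ici a) n hξ.1
  have term_le :=
    iteratedDerivWithin_div_factorial_mul_pow_le hf hx.le (by linarith : x < x + 2 * (x - a)) n
  rw [taylor, add_sub_cancel_left, abs_of_nonneg (by positivity)]
  calc iteratedDerivWithin n f (Ici a) ξ / n ! * (x - a) ^ n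
      ≤ iteratedDerivWithin n f (Ici a) x / n ! * (x - a) ^ n := by
        gcongr
        exact monotoneOn_iteratedDerivWithin hf n hξ.1 hx.le hξ.2
    _ = iteratedDerivWithin n f (Ici a) x / n ! * (x + 2 * (x - a) - x) ^ n * (1 / 2) ^ n := by
        rw [mul_assoc, ← mul_pow]
        ring
    _ ≤ f (x + 2 * (x - a)) * (1 / 2) ^ n := by gcongr

theorem hasSum_taylor_of_absolutelyMonotoneOn (hf : AbsolutelyMonotoneOn f (Ici a))
    (hx : a ≤ x) :
    HasSum (fun n => iteratedDerivWithin n f (Ici a) a / n ! * (x - a) ^ n) (f x) := by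
  have terms_nonneg (n : ℕ) : 0 ≤ iteratedDerivWithin n f (Ici a) a / n ! * (x - a) ^ n :=
    mul_nonneg (div_nonneg (hf.iteratedDerivWithin_nonneg (uniqueDiffOn_Ici a) n self_mem_Ici)
      (by positivity)) (pow_nonneg (sub_nonneg.2 hx) n)
  rw [hasSum_iff_tendsto_nat_of_nonneg terms_nonneg]
  rcases hx.eq_or_lt with rfl | hx
  · refine (tendsto_add_atTop_iff_nat 1).1 (tendsto_const_nhds.congr fun n => ?_)
    simp [Finset.sum_range_succ']
  have bound_tendsto : Tendsto (fun n : ℕ => f (x + 2 * (x - a)) * (1 / 2) ^ n) atTop (𝓝 0) := by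
    simpa using (tendsto_pow_atTop_nhds_zero_of_lt_one (by norm_num : (0 : ℝ) ≤ 1 / 2)
      (by norm_num)).const_mul (f (x + 2 * (x - a)))
  refine tendsto_iff_dist_tendsto_zero.2 (squeeze_zero (fun n => dist_nonneg) (fun n => ?_)
    bound_tendsto)
  rw [dist_comm, Real.dist_eq]
  exact abs_sub_taylor_sum_le hf hx n

theorem exists_absolutelyMonotonicEntire_eqOn_of_absolutelyMonotoneOn
    (hf : AbsolutelyMonotoneOn f (Ici 0)) :
    ∃ G, AbsolutelyMonotonicEntire G ∧ EqOn f G (Ici 0) :=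
  exists_absolutelyMonotonicEntire_eqOn_of_hasSum
    (c := fun n => iteratedDerivWithin n f (Ici 0) 0 / n !)
    (fun n => div_nonneg (hf.iteratedDerivWithin_nonneg (uniqueDiffOn_Ici 0) n self_mem_Ici)
      (by positivity))
    fun x hx => by simpa only [sub_zero] using hasSum_taylor_of_absolutelyMonotoneOn hf hx

end Bernstein

end AbsolutelyMonotone

/-! ### Positive sequences -/

section PositiveSequences

variable {s : ℕ → ℝ} {K : Set ℝ} {p : ℝ[X]}

/-- The Riesz functional of a sequence `s`: the linear functional on real polynomials sending
`X ^ k` to `s k`. For a moment sequence it is integration against the measure. -/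
noncomputable def rieszFunctional (s : ℕ → ℝ) : ℝ[X] →ₗ[ℝ] ℝ :=
  Polynomial.lsum fun k => LinearMap.toSpanSingleton ℝ ℝ (s k)

theorem rieszFunctional_apply (s : ℕ → ℝ) (p : ℝ[X]) :
    rieszFunctional s p = ∑ k ∈ p.support, p.coeff k * s k := by
  simp [rieszFunctional, Polynomial.lsum_apply, Polynomial.sum_def]

theorem rieszFunctional_X_pow (s : ℕ → ℝ) (k : ℕ) : rieszFunctional s (X ^ k) = s k := by
  simp [rieszFunctional, Polynomial.lsum_apply, ← Polynomial.monomial_one_right_eq_X_pow]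

theorem rieszFunctional_nonneg_of_mem_momentSet (hs : s ∈ momentSet K)
    (hp : ∀ x ∈ K, 0 ≤ p.eval x) : 0 ≤ rieszFunctional s p := by
  obtain ⟨μ, hμ, hK, hs⟩ := hs
  have eq_integral : rieszFunctional s p = ∫ x, p.eval x ∂μ := by
    simp_rw [rieszFunctional_apply, Polynomial.eval_eq_sum, Polynomial.sum_def, hs, moment]
    rw [integral_finsetSum _ fun k _ => (hμ k).const_mul _]
    simp_rw [integral_const_mul]
  rw [eq_integral]
  refine integral_nonneg_of_ae ?_
  filter_upwards [mem_ae_iff.2 hK] with x hx using hp x hx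

/-- A positive sequence: its Riesz functional is nonnegative on nonnegative polynomials. -/
def IsPosSeq (s : ℕ → ℝ) : Prop :=
  ∀ p : ℝ[X], (∀ x, 0 ≤ p.eval x) → 0 ≤ rieszFunctional s p

theorem isPosSeq_of_mem_momentSet (hs : s ∈ momentSet K) : IsPosSeq s :=
  fun _ hp => rieszFunctional_nonneg_of_mem_momentSet hs fun x _ => hp x

/-- `F` applied entrywise maps the moment sequence of every measure `a δ₁ + b δᵤ` to a positive
sequence. -/
def MapsTwoPointToPosSeq (u : ℝ) (F : ℝ → ℝ) : Prop :=
  ∀ a b : ℝ, 0 ≤ a → 0 ≤ b → IsPosSeq fun k => F (a + b * u ^ k)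

end PositiveSequences

section Smooth

variable {g : ℝ → ℝ} {u : ℝ}

theorem taylorWithinEval_univ_of_iteratedDeriv_eq_zero {f : ℝ → ℝ} {a : ℝ} {n : ℕ}
    (h : ∀ j < n, iteratedDeriv j f a = 0) (x : ℝ) :
    taylorWithinEval f n univ a x = iteratedDeriv n f a / n ! * (x - a) ^ n := by
  rw [taylor_within_apply, Finset.sum_range_succ, Finset.sum_eq_zero, zero_add,
    iteratedDerivWithin_univ, smul_eq_mul]
  · ring
  · intro j hj
    rw [iteratedDerivWithin_univ, h j (Finset.mem_range.1 hj), smul_zero]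

theorem iteratedDeriv_nonneg_of_eventually_nonneg {f : ℝ → ℝ} {a : ℝ} {n : ℕ}
    (hf : ContDiff ℝ n f) (hnonneg : ∀ᶠ x in 𝓝[>] a, 0 ≤ f x)
    (h : ∀ j < n, iteratedDeriv j f a = 0) : 0 ≤ iteratedDeriv n f a := by
  have quotient_tendsto :
      Tendsto (fun x => f x / (x - a) ^ n) (𝓝[>] a) (𝓝 (iteratedDeriv n f a / n !)) := by
    rw [← tendsto_sub_nhds_zero_iff]
    refine ((Real.taylor_tendsto convex_univ (mem_univ a) hf.contDiffOn).mono_left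
      (nhdsWithin_mono a (subset_univ (Ioi a)))).congr' ?_
    filter_upwards [self_mem_nhdsWithin] with x hx
    have : (x - a) ^ n ≠ 0 := pow_ne_zero n (sub_pos.2 hx).ne'
    rw [taylorWithinEval_univ_of_iteratedDeriv_eq_zero h, sub_div, mul_div_cancel_right₀ _ this]
  have quotient_nonneg : ∀ᶠ x in 𝓝[>] a, 0 ≤ f x / (x - a) ^ n := by
    filter_upwards [hnonneg, self_mem_nhdsWithin] with x hfx hx
    exact div_nonneg hfx (pow_nonneg (sub_pos.2 hx).le n)
  have := mul_nonneg (ge_of_tendsto quotient_tendsto quotient_nonneg) (Nat.cast_nonneg n !)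
  rwa [div_mul_cancel₀ _ (by positivity)] at this

theorem iteratedDeriv_rieszFunctional_comp {n : ℕ} (hg : ContDiff ℝ n g) (p : ℝ[X]) (u a : ℝ) :
    iteratedDeriv n (fun b => rieszFunctional (fun k => g (a + b * u ^ k)) p) 0 =
      p.eval (u ^ n) * iteratedDeriv n g a := by
  have shift_contDiff : ContDiff ℝ n fun y => g (a + y) := by fun_prop
  have term_deriv (k : ℕ) :
      iteratedDeriv n (fun b => g (a + b * u ^ k)) 0 = (u ^ n) ^ k * iteratedDeriv n g a := by
    have := congrFun (iteratedDeriv_comp_const_mul shift_contDiff (u ^ k)) 0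
    rw [iteratedDeriv_comp_const_add] at this
    simpa only [mul_comm _ (u ^ k), mul_zero, add_zero, pow_right_comm u k n] using this
  simp_rw [rieszFunctional_apply]
  rw [iteratedDeriv_fun_sum fun k _ => ContDiff.contDiffAt (by fun_prop)]
  simp_rw [iteratedDeriv_const_mul_field, term_deriv, Polynomial.eval_eq_sum, Polynomial.sum_def,
    Finset.sum_mul, mul_assoc]

theorem exists_nonneg_polynomial_eval_pow (hu : 0 < u) (hu1 : u ≠ 1) (n : ℕ) :
    ∃ p : ℝ[X], (∀ x, 0 ≤ p.eval x) ∧ (∀ j < n, p.eval (u ^ j) = 0) ∧ 0 < p.eval (u ^ n) := by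
  have eval_eq (x : ℝ) : (∏ j ∈ Finset.range n, (X - C (u ^ j)) ^ 2 : ℝ[X]).eval x =
      ∏ j ∈ Finset.range n, (x - u ^ j) ^ 2 := by
    simp [Polynomial.eval_prod]
  refine ⟨∏ j ∈ Finset.range n, (X - C (u ^ j)) ^ 2, fun x => ?_, fun j hj => ?_, ?_⟩
  · exact eval_eq x ▸ Finset.prod_nonneg fun j _ => sq_nonneg _
  · exact eval_eq _ ▸ Finset.prod_eq_zero (Finset.mem_range.2 hj) (by simp)
  · refine eval_eq _ ▸ Finset.prod_pos fun j hj => sq_pos_of_ne_zero (sub_ne_zero.2 ?_)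
    exact fun h => (Finset.mem_range.1 hj).ne' (pow_right_injective₀ hu hu1 h)

theorem MapsTwoPointToPosSeq.iteratedDeriv_nonneg (h : MapsTwoPointToPosSeq u g) (hu : 0 < u)
    (hu1 : u ≠ 1) {n : ℕ} (hg : ContDiff ℝ n g) {a : ℝ} (ha : 0 ≤ a) :
    0 ≤ iteratedDeriv n g a := by
  obtain ⟨p, hp, hp_zero, hp_pos⟩ := exists_nonneg_polynomial_eval_pow hu hu1 n
  have deriv_eq {j : ℕ} (hj : j ≤ n) := iteratedDeriv_rieszFunctional_comp
    (hg.of_le (by exact_mod_cast hj : (j : ℕ∞ω) ≤ n)) p u a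
  refine nonneg_of_mul_nonneg_right (deriv_eq le_rfl ▸ ?_) hp_pos
  refine iteratedDeriv_nonneg_of_eventually_nonneg ?_ ?_ fun j hj => ?_
  · simp only [rieszFunctional_apply]
    fun_prop
  · filter_upwards [self_mem_nhdsWithin] with b hb using h a b ha (le_of_lt hb) p hp
  · rw [deriv_eq hj.le, hp_zero j hj, zero_mul]

theorem MapsTwoPointToPosSeq.absolutelyMonotoneOn (h : MapsTwoPointToPosSeq u g) (hu : 0 < u)
    (hu1 : u ≠ 1) (hg : ContDiff ℝ ∞ g) : AbsolutelyMonotoneOn g (Ici 0) :=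
  .of_contDiff hg fun n _ ha =>
    h.iteratedDeriv_nonneg hu hu1 (hg.of_le (by exact_mod_cast le_top)) ha

end Smooth

section Mollification

variable {F : ℝ → ℝ} {c u : ℝ} {ρ : ContDiffBump c}

theorem integrable_normed_mul_comp_sub (ρ : ContDiffBump c) (hF : LocallyIntegrable F) (x : ℝ) :
    Integrable fun t => ρ.normed volume t * F (x - t) := by
  simpa [ConvolutionExistsAt] using ρ.hasCompactSupport_normed.convolutionExists_left
    (ContinuousLinearMap.lsmul ℝ ℝ) ρ.continuous_normed hF x

theorem normed_mul_le_normed_mul {f g : ℝ → ℝ} (h : ∀ t ∈ Metric.ball c ρ.rOut, f t ≤ g t)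
    (t : ℝ) : ρ.normed volume t * f t ≤ ρ.normed volume t * g t := by
  by_cases ht : t ∈ Metric.ball c ρ.rOut
  · exact mul_le_mul_of_nonneg_left (h t ht) (ρ.nonneg_normed t)
  · rw [← ρ.support_normed_eq (μ := volume), Function.notMem_support] at ht
    simp [ht]

theorem convolution_normed_mem_Icc (hF : LocallyIntegrable F) {x m M : ℝ}
    (h : ∀ t ∈ Metric.ball c ρ.rOut, F (x - t) ∈ Icc m M) :
    (ρ.normed volume ⋆[ContinuousLinearMap.lsmul ℝ ℝ, volume] F) x ∈ Icc m M := by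
  have integral_const_eq (y : ℝ) : ∫ t, ρ.normed volume t * y = y := by
    rw [integral_mul_const, ρ.integral_normed, one_mul]
  have integrable_const (y : ℝ) : Integrable fun t => ρ.normed volume t * y :=
    ρ.integrable_normed.mul_const y
  simp only [convolution_lsmul, smul_eq_mul]
  constructor
  · calc m = ∫ t, ρ.normed volume t * m := (integral_const_eq m).symm
      _ ≤ ∫ t, ρ.normed volume t * F (x - t) :=
        integral_mono (integrable_const m) (integrable_normed_mul_comp_sub ρ hF x)
          (normed_mul_le_normed_mul fun t ht => (h t ht).1)
  · calc ∫ t, ρ.normed volume t * F (x - t) ≤ ∫ t, ρ.normed volume t * M :=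
        integral_mono (integrable_normed_mul_comp_sub ρ hF x) (integrable_const M)
          (normed_mul_le_normed_mul fun t ht => (h t ht).2)
      _ = M := integral_const_eq M

theorem MapsTwoPointToPosSeq.convolution_normed (h : MapsTwoPointToPosSeq u F)
    (hF : LocallyIntegrable F) (hρ : Metric.ball c ρ.rOut ⊆ Iic 0) :
    MapsTwoPointToPosSeq u (ρ.normed volume ⋆[ContinuousLinearMap.lsmul ℝ ℝ, volume] F) := by
  intro a b ha hb p hp
  have eq_integral : rieszFunctional
      (fun k => (ρ.normed volume ⋆[ContinuousLinearMap.lsmul ℝ ℝ, volume] F) (a + b * u ^ k)) p =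
      ∫ t, ρ.normed volume t * rieszFunctional (fun k => F (a - t + b * u ^ k)) p := by
    simp only [rieszFunctional_apply, convolution_lsmul, smul_eq_mul, ← integral_const_mul,
      Finset.mul_sum]
    rw [← integral_finsetSum _ fun k _ => (integrable_normed_mul_comp_sub ρ hF _).const_mul _]
    simp only [add_sub_right_comm, mul_left_comm]
  rw [eq_integral]
  refine integral_nonneg fun t => ?_
  simpa using normed_mul_le_normed_mul (ρ := ρ) (f := 0)
    (fun t ht => h (a - t) b (by linarith [mem_Iic.1 (hρ ht)]) hb p hp) t

theorem MapsTwoPointToPosSeq.exists_contDiff_mem_Icc (h : MapsTwoPointToPosSeq u F)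
    (hF : Monotone F) {ε : ℝ} (hε : 0 < ε) :
    ∃ g, ContDiff ℝ ∞ g ∧ MapsTwoPointToPosSeq u g ∧
      ∀ x, g x ∈ Icc (Function.rightLim F x) (F (x + ε)) := by
  let ρ : ContDiffBump (-(ε / 2)) := ⟨ε / 4, ε / 2, by positivity, by linarith⟩
  have ball_eq : Metric.ball (-(ε / 2)) ρ.rOut = Ioo (-ε) 0 := by
    rw [Real.ball_eq_Ioo]
    congr 1 <;> simp only [ρ] <;> ring
  refine ⟨ρ.normed volume ⋆[ContinuousLinearMap.lsmul ℝ ℝ, volume] F, ?_, ?_, fun x => ?_⟩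
  · exact ρ.hasCompactSupport_normed.contDiff_convolution_left _ ρ.contDiff_normed
      hF.locallyIntegrable
  · exact h.convolution_normed hF.locallyIntegrable (ball_eq ▸ fun t ht => ht.2.le)
  · refine convolution_normed_mem_Icc hF.locallyIntegrable (ball_eq ▸ fun t ht => ?_)
    exact ⟨hF.rightLim_le (by linarith [ht.2]), hF (by linarith [ht.1])⟩

theorem MapsTwoPointToPosSeq.exists_eqOn_rightLim (h : MapsTwoPointToPosSeq u F) (hu : 0 < u)
    (hu1 : u ≠ 1) (hF : Monotone F) :
    ∃ G, AbsolutelyMonotonicEntire G ∧ EqOn (Function.rightLim F) G (Ici 0) := by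
  choose g hg_smooth hg hg_mem using fun m : ℕ =>
    h.exists_contDiff_mem_Icc hF (Nat.one_div_pos_of_nat (α := ℝ) (n := m))
  choose G hG hgG using fun m => exists_absolutelyMonotonicEntire_eqOn_of_absolutelyMonotoneOn
    ((hg m).absolutelyMonotoneOn hu hu1 (hg_smooth m))
  refine AbsolutelyMonotonicEntire.exists_eqOn_of_tendsto (l := atTop) hG fun x hx => ?_
  have upper_tendsto :
      Tendsto (fun m : ℕ => F (x + 1 / ((m : ℝ) + 1))) atTop (𝓝 (Function.rightLim F x)) := by
    refine (hF.tendsto_rightLim x).comp (tendsto_nhdsWithin_iff.2 ⟨?_, Eventually.of_forall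
      fun m => lt_add_of_pos_right x Nat.one_div_pos_of_nat⟩)
    simpa using (tendsto_one_div_add_atTop_nhds_zero_nat (𝕜 := ℝ)).const_add x
  simp only [← fun m => hgG m hx]
  exact tendsto_of_tendsto_of_tendsto_of_le_of_le tendsto_const_nhds upper_tendsto
    (fun m => (hg_mem m x).1) fun m => (hg_mem m x).2

theorem eqOn_Ioi_of_eqOn_rightLim {G : ℝ → ℝ} {a : ℝ} (hF : Monotone F) (hG : Continuous G)
    (h : EqOn (Function.rightLim F) G (Ici a)) : EqOn F G (Ioi a) := by
  intro x hx
  refine le_antisymm (h (Ioi_subset_Ici_self hx) ▸ hF.le_rightLim le_rfl) ?_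
  refine le_of_tendsto (hG.continuousAt.continuousWithinAt (s := Iio x)) ?_
  filter_upwards [Ioo_mem_nhdsLT hx] with y hy
  exact h hy.1.le ▸ hF.rightLim_le hy.2

theorem MapsTwoPointToPosSeq.exists_eqOn_Ioi (h : MapsTwoPointToPosSeq u F) (hu : 0 < u)
    (hu1 : u ≠ 1) (hF : Monotone F) :
    ∃ G, AbsolutelyMonotonicEntire G ∧ EqOn F G (Ioi 0) := by
  obtain ⟨G, hG, hFG⟩ := h.exists_eqOn_rightLim hu hu1 hF
  exact ⟨G, hG, eqOn_Ioi_of_eqOn_rightLim hF hG.continuous hFG⟩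

end Mollification

/-! ### Entrywise transforms of moment sequences -/

section Transforms

variable {F G : ℝ → ℝ} {s : ℕ → ℝ} {K : Set ℝ}

theorem add_mul_pow_mem_momentSet {a b x y : ℝ} (ha : 0 ≤ a) (hb : 0 ≤ b) (hx : x ∈ K)
    (hy : y ∈ K) : (fun k => a * x ^ k + b * y ^ k) ∈ momentSet K :=
  add_mem_momentSet (smul_mem_momentSet ha (geometric_mem_momentSet hx))
    (smul_mem_momentSet hb (geometric_mem_momentSet hy))

theorem rieszFunctional_X_pow_mul_one_add_X_sq (s : ℕ → ℝ) (j : ℕ) :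
    rieszFunctional s (X ^ j * (1 + X) ^ 2) = s j + 2 * s (j + 1) + s (j + 2) := by
  have expand : (X ^ j * (1 + X) ^ 2 : ℝ[X]) = X ^ j + (2 : ℝ) • X ^ (j + 1) + X ^ (j + 2) := by
    rw [ofNat_smul_eq_nsmul]
    ring
  simp only [expand, map_add, map_smul, rieszFunctional_X_pow, smul_eq_mul]

theorem neg_one_pow_mul_nonneg_of_mem_momentSet_Iic (hs : s ∈ momentSet (Iic 0)) (j : ℕ) :
    0 ≤ (-1) ^ j * (s j + 2 * s (j + 1) + s (j + 2)) := by
  rw [← rieszFunctional_X_pow_mul_one_add_X_sq, ← smul_eq_mul, ← map_smul]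
  refine rieszFunctional_nonneg_of_mem_momentSet hs fun x hx => ?_
  have pow_nonneg : 0 ≤ (-x) ^ j := pow_nonneg (neg_nonneg.2 hx) j
  calc 0 ≤ (-x) ^ j * (1 + x) ^ 2 := mul_nonneg pow_nonneg (sq_nonneg _)
    _ = eval x ((-1 : ℝ) ^ j • (X ^ j * (1 + X) ^ 2)) := by
      simp [neg_pow x, mul_assoc]

theorem exists_mem_momentSet_of_mapsTo_truncMomentSet
    (hF : ∀ s ∈ truncMomentSet 4 {-1, 0}, (fun k => F (s k)) ∈ truncMomentSet 4 K)
    {a b : ℝ} (ha : 0 ≤ a) (hb : 0 ≤ b) :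
    ∃ t ∈ momentSet K, F (a + b) = t 0 ∧ F (-a) = t 1 ∧ F a = t 2 ∧ F (-a) = t 3 ∧ F a = t 4 := by
  have two_point_mem : (fun k => a * (-1) ^ k + b * 0 ^ k) ∈ momentSet {-1, 0} :=
    add_mul_pow_mem_momentSet ha hb (by simp) (by simp)
  obtain ⟨t, ht, hFt⟩ := mem_truncMomentSet_iff.1
    (hF _ (mem_truncMomentSet_iff.2 ⟨_, two_point_mem, fun _ => rfl⟩))
  exact ⟨t, ht, by simpa [Fin.forall_fin_succ, pow_succ] using hFt⟩

theorem odd_of_mapsTo_truncMomentSet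
    (hF : ∀ s ∈ truncMomentSet 4 {-1, 0}, (fun k => F (s k)) ∈ truncMomentSet 4 (Iic 0)) :
    F.Odd := by
  have neg_eq {a : ℝ} (ha : 0 ≤ a) : F (-a) = -F a := by
    obtain ⟨t, ht, -, h₁, h₂, h₃, h₄⟩ :=
      exists_mem_momentSet_of_mapsTo_truncMomentSet hF ha le_rfl
    have := neg_one_pow_mul_nonneg_of_mem_momentSet_Iic ht 1
    have := neg_one_pow_mul_nonneg_of_mem_momentSet_Iic ht 2
    linarith
  intro a
  rcases le_total 0 a with ha | ha
  · exact neg_eq ha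
  · linarith [neg_neg a ▸ neg_eq (neg_nonneg.2 ha)]

theorem monotone_of_mapsTo_truncMomentSet
    (hF : ∀ s ∈ truncMomentSet 4 {-1, 0}, (fun k => F (s k)) ∈ truncMomentSet 4 (Iic 0)) :
    Monotone F := by
  have hodd := odd_of_mapsTo_truncMomentSet hF
  refine monotone_of_odd_of_monotoneOn_nonneg hodd fun a ha b _ hab => ?_
  obtain ⟨t, ht, h₀, h₁, h₂, -, -⟩ :=
    exists_mem_momentSet_of_mapsTo_truncMomentSet hF ha (sub_nonneg.2 hab)
  rw [add_sub_cancel] at h₀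
  have := neg_one_pow_mul_nonneg_of_mem_momentSet_Iic ht 0
  linarith [hodd a]

theorem odd_apply_neg_one_pow_mul (hF : F.Odd) (k : ℕ) (x : ℝ) :
    F ((-1) ^ k * x) = (-1) ^ k * F x := by
  rcases neg_one_pow_eq_or ℝ k with h | h <;> simp [h, hF x]

theorem mapsTwoPointToPosSeq_of_odd {u : ℝ} (hodd : F.Odd)
    (hF : ∀ s ∈ momentSet {-1, -u}, (fun k => F (s k)) ∈ momentSet K) :
    MapsTwoPointToPosSeq u F := by
  intro a b ha hb
  have image_mem := hF _ (add_mul_pow_mem_momentSet (x := -1) (y := -u) ha hb (by simp) (by simp))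
  convert isPosSeq_of_mem_momentSet (neg_one_pow_mul_mem_momentSet image_mem) using 2 with k
  rw [← odd_apply_neg_one_pow_mul hodd, mul_add, mul_left_comm, mul_left_comm _ b, ← mul_pow,
    ← mul_pow]
  simp

theorem odd_and_eqOn_Ioi_iff :
    (F.Odd ∧ EqOn F G (Ioi 0)) ↔
      (∀ x > 0, F x = G x) ∧ F 0 = 0 ∧ ∀ x < 0, F x = -G (-x) := by
  constructor
  · rintro ⟨hodd, hFG⟩
    refine ⟨hFG, hodd.map_zero, fun x hx => ?_⟩
    rw [← hFG (neg_pos.2 hx), hodd, neg_neg]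
  · rintro ⟨hpos, hzero, hneg⟩
    refine ⟨fun x => ?_, hpos⟩
    rcases lt_trichotomy x 0 with hx | rfl | hx
    · rw [hpos (-x) (neg_pos.2 hx), hneg x hx, neg_neg]
    · simp [hzero]
    · rw [hneg (-x) (neg_neg_of_pos hx), neg_neg, hpos x hx]

theorem comp_mem_momentSet_of_eqOn_Ioi (hG : AbsolutelyMonotonicEntire G)
    (hFG : EqOn F G (Ioi 0)) (hF0 : F 0 = 0) {M : Submonoid ℝ} (hM : MeasurableSet (M : Set ℝ))
    (zero_mem : 0 ∈ M) (hM_nonneg : (M : Set ℝ) ⊆ Ici 0) (hs : s ∈ momentSet M) :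
    (fun k => F (s k)) ∈ momentSet M := by
  have hs_Ici : s ∈ momentSet (Ici 0) := momentSet_mono hM_nonneg hs
  have s_nonneg := nonneg_of_mem_momentSet_Ici hs_Ici
  by_cases h : ∃ j, s j = 0
  · obtain ⟨j, hj⟩ := h
    have F_nonneg : 0 ≤ F (s 0) := by
      rcases (s_nonneg 0).eq_or_lt with h0 | h0
      · rw [← h0, hF0]
      · exact hFG h0 ▸ hG.nonneg h0.le
    have comp_eq : (fun k => F (s k)) = F (s 0) • fun k => 0 ^ k := by
      ext k
      rcases eq_or_ne k 0 with rfl | hk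
      · simp
      · simp [eq_zero_of_mem_momentSet_Ici hs_Ici hj hk, hF0, hk]
    exact comp_eq ▸ smul_mem_momentSet F_nonneg (geometric_mem_momentSet zero_mem)
  · push Not at h
    have comp_eq : (fun k => F (s k)) = fun k => G (s k) :=
      funext fun k => hFG ((s_nonneg k).lt_of_ne' (h k))
    exact comp_eq ▸ hG.comp_mem_momentSet hM hs

theorem comp_mem_momentSet_neg_of_odd (hodd : F.Odd)
    (hF : ∀ s ∈ momentSet K, (fun k => F (s k)) ∈ momentSet K) (hs : s ∈ momentSet (-K)) :
    (fun k => F (s k)) ∈ momentSet (-K) := by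
  have reflection_mem : (fun k => (-1) ^ k * s k) ∈ momentSet K :=
    neg_neg K ▸ neg_one_pow_mul_mem_momentSet hs
  convert neg_one_pow_mul_mem_momentSet (hF _ reflection_mem) using 2 with k
  rw [odd_apply_neg_one_pow_mul hodd, ← mul_assoc, ← mul_pow]
  simp

end Transforms

/-- Classification of the entrywise moment transformers on `[-1,0]` (odd case). -/
theorem moment_transform_Icc_neg_one_zero_TFAE (u₀ : ℝ) (hu₀ : u₀ ∈ Set.Ioo (0 : ℝ) 1)
    (F : ℝ → ℝ) :
    List.TFAE
      [(∀ s ∈ momentSet ({-1, -u₀} : Set ℝ),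
          (fun k => F (s k)) ∈ momentSet (Set.Iic (0 : ℝ))) ∧
        (∀ s ∈ truncMomentSet 4 ({-1, 0} : Set ℝ),
          (fun k => F (s k)) ∈ truncMomentSet 4 (Set.Iic (0 : ℝ))) ∧
        (∀ u ∈ Set.Ioo (0 : ℝ) 1, ∀ s ∈ truncMomentSet 4 ({-u} : Set ℝ),
          (fun k => F (s k)) ∈ truncMomentSet 4 (Set.Iic (0 : ℝ))),
        ∀ s ∈ momentSet (Set.Icc (-1 : ℝ) 0),
          (fun k => F (s k)) ∈ momentSet (Set.Icc (-1 : ℝ) 0),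
        ∃ G : ℝ → ℝ, AbsolutelyMonotonicEntire G ∧ (∀ x > (0 : ℝ), F x = G x) ∧
          F 0 = 0 ∧ ∀ x < (0 : ℝ), F x = -G (-x)] := by
  tfae_have 1 → 3 := by
    rintro ⟨hF, hF_trunc, -⟩
    have hodd := odd_of_mapsTo_truncMomentSet hF_trunc
    obtain ⟨G, hG, hFG⟩ := (mapsTwoPointToPosSeq_of_odd hodd hF).exists_eqOn_Ioi hu₀.1 hu₀.2.ne
      (monotone_of_mapsTo_truncMomentSet hF_trunc)
    exact ⟨G, hG, odd_and_eqOn_Ioi_iff.1 ⟨hodd, hFG⟩⟩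
  tfae_have 3 → 2 := by
    rintro ⟨G, hG, h⟩
    obtain ⟨hodd, hFG⟩ := odd_and_eqOn_Ioi_iff.2 h
    have neg_Icc_eq : Icc (-1 : ℝ) 0 = -Icc 0 1 := by rw [Set.neg_Icc, neg_zero]
    rw [neg_Icc_eq]
    exact fun s => comp_mem_momentSet_neg_of_odd hodd fun t =>
      comp_mem_momentSet_of_eqOn_Ioi (M := unitInterval.submonoid) hG hFG hodd.map_zero
        measurableSet_Icc unitInterval.zero_mem Icc_subset_Ici_self
  tfae_have 2 → 1 := by
    intro hF
    have mapsTo_Iic {K : Set ℝ} (hK : K ⊆ Icc (-1) 0) (s) (hs : s ∈ momentSet K) :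
        (fun k => F (s k)) ∈ momentSet (Iic 0) :=
      momentSet_mono Icc_subset_Iic_self (hF s (momentSet_mono hK hs))
    exact ⟨mapsTo_Iic (by simp [insert_subset_iff, hu₀.1.le, hu₀.2.le]),
      comp_mem_truncMomentSet (mapsTo_Iic (by simp [insert_subset_iff])),
      fun u hu => comp_mem_truncMomentSet (mapsTo_Iic (by simp [hu.1.le, hu.2.le]))⟩
  tfae_finish
end

section
/- Let F : (0,ρ) → ℝ where 0 < ρ ≤ ∞, fix u₀ ∈ (0,1) and an integer N ≥ 3, and set u := (1, u₀, …, u₀^{N−1})ᵀ ∈ ℝᴺ. Suppose that F applied entrywise maps every 2×2 positive semidefinite matrix with entries in (0,ρ) to a positive semidefinite matrix, and that F[A] is positive semidefinite for every N×N matrix A = a·𝟏_{N×N} + b·uuᵀ with a ∈ [0,ρ), b ∈ [0,ρ−a), and 0 < a+b < ρ. Then F is (N−3)-times continuously differentiable on (0,ρ) with F^{(k)}(x) ≥ 0 for all x ∈ (0,ρ) and 0 ≤ k ≤ N−3, and F^{(N−3)} is convex and non-decreasing on (0,ρ). If moreover F is (N−1)-times continuously differentiable on (0,ρ), then F^{(k)}(x)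 ≥ 0 for all x ∈ (0,ρ) and 0 ≤ k ≤ N−1. Finally, if F is continuous on (0,ρ), the assumption that F preserves positive semidefiniteness of 2×2 matrices is not needed. -/
open Filter Set
open scoped ENNReal

/-- The interval `(0, ρ)` inside `ℝ`, for an extended parameter `0 < ρ ≤ ∞`. -/
def openSeg (ρ : ℝ≥0∞) : Set ℝ := {x : ℝ | 0 < x ∧ ENNReal.ofReal x < ρ}

/-!
Pair `F[a𝟏 + b uuᵀ]` with a vector orthogonal to `u^0, …, u^(K-1)` and normalised against `u^K`
(entrywise powers; such a vector exists by the Vandermonde determinant). As `b → 0⁺` the quadratic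
form is `F^(K)(a) / K! * b^K + o(b^K)`, so `F^(K) ≥ 0` for every `K < N` once `F` is smooth.

A continuous `F` is mollified, which preserves positivity. Nonnegativity of the derivatives of the
mollified functions makes their iterated forward differences nonnegative, monotone and convex, a
property that survives the pointwise limit. Dividing differences by the step and letting it tend to
zero passes the property on to right derivatives; being convex, these are continuous, so `F` is
differentiable, and one iterates.

Preserving positivity of `2 × 2` matrices makes `F` monotone with `F(√(xz))² ≤ F(x) F(z)`. Applied
to points on both sides of a jump this bounds the right limit by the left one, so `F` is continuous.
-/

open scoped Topology Matrix fwdDiff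

section QuadraticForm
open scoped Nat

variable {ι : Type*} {u v : ι → ℝ} {f : ℝ → ℝ} {a b x : ℝ} {S : Set ℝ}

/-- The matrix `f[a𝟏 + b uuᵀ]`. -/
def entrywiseMatrix (u : ι → ℝ) (f : ℝ → ℝ) (a b : ℝ) : Matrix ι ι ℝ :=
  Matrix.of fun i j => f (a + b * (u i * u j))

/-- `f` applied entrywise preserves positivity of the matrices `a𝟏 + b uuᵀ` with `b ≥ 0` whose
extreme values `a` and `a + b` lie in `S`. -/
def PreservesPosSemidefOn (u : ι → ℝ) (S : Set ℝ) (f : ℝ → ℝ) : Prop :=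
  ∀ a ∈ S, ∀ b, 0 ≤ b → a + b ∈ S → (entrywiseMatrix u f a b).PosSemidef

namespace PreservesPosSemidefOn

theorem mono {T : Set ℝ} (h : PreservesPosSemidefOn u S f) (hTS : T ⊆ S) :
    PreservesPosSemidefOn u T f :=
  fun a ha b hb hab => h a (hTS ha) b hb (hTS hab)

theorem congr {g : ℝ → ℝ} (h : PreservesPosSemidefOn u S f) (hS : S.OrdConnected)
    (hu : ∀ i, u i ∈ Icc 0 1) (hfg : EqOn f g S) : PreservesPosSemidefOn u S g := by
  intro a ha b hb hab
  have hentries (i j : ι) : a + b * (u i * u j) ∈ S := by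
    have hlow : 0 ≤ u i * u j := mul_nonneg (hu i).1 (hu j).1
    have hhigh : u i * u j ≤ 1 := mul_le_one₀ (hu i).2 (hu j).1 (hu j).2
    exact hS.out ha hab ⟨by nlinarith, by nlinarith⟩
  convert h a ha b hb hab using 1
  ext i j
  exact (hfg (hentries i j)).symm

end PreservesPosSemidefOn

variable [Fintype ι]

/-- The quadratic form of `f[a𝟏 + b uuᵀ]` evaluated at `v`, as a single sum over pairs of indices
so that it is visibly a finite combination of point evaluations of `f`. -/
def entrywiseForm (u v : ι → ℝ) (f : ℝ → ℝ) (a b : ℝ) : ℝ :=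
  ∑ p : ι × ι, v p.1 * v p.2 * f (a + b * (u p.1 * u p.2))

theorem posSemidef_entrywiseMatrix_iff :
    (entrywiseMatrix u f a b).PosSemidef ↔ ∀ v, 0 ≤ entrywiseForm u v f a b := by
  have hsymm : (entrywiseMatrix u f a b).IsHermitian :=
    Matrix.IsHermitian.ext fun i j => by simp [entrywiseMatrix, mul_comm (u i)]
  have hform : ∀ v, star v ⬝ᵥ entrywiseMatrix u f a b *ᵥ v = entrywiseForm u v f a b := fun v => by
    simp only [entrywiseForm, entrywiseMatrix, Fintype.sum_prod_type, dotProduct, Matrix.mulVec,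
      Matrix.of_apply, Finset.mul_sum, star_trivial]
    exact Finset.sum_congr rfl fun i _ => Finset.sum_congr rfl fun j _ => by ring
  simp_rw [Matrix.posSemidef_iff_dotProduct_mulVec, hform]
  exact and_iff_right hsymm

theorem sum_mul_mul_pow_eq_sq (m : ℕ) :
    ∑ p : ι × ι, v p.1 * v p.2 * (u p.1 * u p.2) ^ m = (∑ i, v i * u i ^ m) ^ 2 := by
  rw [sq, Finset.sum_mul_sum, Fintype.sum_prod_type]
  exact Finset.sum_congr rfl fun i _ => Finset.sum_congr rfl fun j _ => by ring

theorem isLittleO_sub_taylor_of_contDiffAt {K : ℕ} (hf : ContDiffAt ℝ K f x) :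
    (fun h => f (x + h) - ∑ m ∈ Finset.range (K + 1), iteratedDeriv m f x / m ! * h ^ m)
      =o[𝓝 0] fun h => h ^ K := by
  obtain ⟨U, hU, hfU⟩ := hf.contDiffOn le_rfl (by simp)
  obtain ⟨ε, hε, hball⟩ := Metric.mem_nhds_iff.1 (by simpa using hU : U ∈ 𝓝 x)
  have hx : x ∈ Metric.ball x ε := Metric.mem_ball_self hε
  have htaylor := taylor_isLittleO (convex_ball x ε) hx (hfU.mono hball)
  rw [Metric.isOpen_ball.nhdsWithin_eq hx] at htaylor
  have hshift : Tendsto (fun h => x + h) (𝓝 0) (𝓝 x) := by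
    simpa using (continuous_const_add x).tendsto 0
  refine (htaylor.comp_tendsto hshift).congr (fun h => ?_) fun h => by simp
  simp only [Function.comp_apply, taylor_within_apply, add_sub_cancel_left, smul_eq_mul]
  congr 1
  refine Finset.sum_congr rfl fun m _ => ?_
  rw [iteratedDerivWithin_of_isOpen Metric.isOpen_ball hx]
  ring

theorem isLittleO_entrywiseForm_sub {K : ℕ} (hf : ContDiffAt ℝ K f x) :
    (fun b => entrywiseForm u v f x b -
      ∑ m ∈ Finset.range (K + 1), iteratedDeriv m f x / m ! * (∑ i, v i * u i ^ m) ^ 2 * b ^ m)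
      =o[𝓝 0] fun b => b ^ K := by
  set R : ℝ → ℝ := fun h =>
    f (x + h) - ∑ m ∈ Finset.range (K + 1), iteratedDeriv m f x / m ! * h ^ m with hR
  have hremainder (c : ℝ) : (fun b => R (b * c)) =o[𝓝 0] fun b => b ^ K := by
    have hscale : Tendsto (fun b => b * c) (𝓝 0) (𝓝 0) := by
      simpa using (continuous_mul_const c).tendsto 0
    refine ((isLittleO_sub_taylor_of_contDiffAt hf).comp_tendsto hscale).trans_isBigO ?_
    simpa [Function.comp_def, mul_pow, mul_comm] using
      Asymptotics.isBigO_const_mul_self (c ^ K) (fun b : ℝ => b ^ K) (𝓝 0)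
  have hsum := Asymptotics.IsLittleO.sum (s := (Finset.univ : Finset (ι × ι))) fun p _ =>
    (hremainder (u p.1 * u p.2)).const_mul_left (v p.1 * v p.2)
  refine hsum.congr_left fun b => ?_
  simp only [hR, entrywiseForm, Finset.sum_apply, mul_sub, Finset.sum_sub_distrib,
    ← sum_mul_mul_pow_eq_sq]
  congr 1
  simp only [Finset.mul_sum, Finset.sum_mul]
  rw [Finset.sum_comm]
  exact Finset.sum_congr rfl fun m _ => Finset.sum_congr rfl fun p _ => by ring

theorem exists_sum_mul_pow_eq_ite {𝕜 : Type*} [Field 𝕜] {N : ℕ} {u : Fin N → 𝕜}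
    (hu : Function.Injective u) (K : Fin N) :
    ∃ v : Fin N → 𝕜, ∀ m : Fin N, ∑ i, v i * u i ^ (m : ℕ) = if m = K then 1 else 0 := by
  have hdet : IsUnit (Matrix.vandermonde u).det :=
    (Matrix.det_vandermonde_ne_zero_iff.2 hu).isUnit
  refine ⟨Pi.single K 1 ᵥ* (Matrix.vandermonde u)⁻¹, fun m => ?_⟩
  have hsolve : (Pi.single K 1 ᵥ* (Matrix.vandermonde u)⁻¹) ᵥ* Matrix.vandermonde u =
      Pi.single K 1 := by
    rw [Matrix.vecMul_vecMul, Matrix.nonsing_inv_mul _ hdet, Matrix.vecMul_one]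
  exact (congr_fun hsolve m).trans (Pi.single_apply K 1 m)

theorem iteratedDeriv_nonneg_of_entrywiseForm_nonneg {N K : ℕ} (hK : K < N) {u : Fin N → ℝ}
    (hu : Function.Injective u) (hf : ContDiffAt ℝ K f x)
    (hform : ∀ v, ∀ᶠ b in 𝓝[>] 0, 0 ≤ entrywiseForm u v f x b) :
    0 ≤ iteratedDeriv K f x := by
  obtain ⟨v, hv⟩ := exists_sum_mul_pow_eq_ite hu ⟨K, hK⟩
  have hleading (b : ℝ) : ∑ m ∈ Finset.range (K + 1),
      iteratedDeriv m f x / m ! * (∑ i, v i * u i ^ m) ^ 2 * b ^ m =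
        iteratedDeriv K f x / K ! * b ^ K := by
    rw [Finset.sum_eq_single_of_mem K (by simp)]
    · simp [hv ⟨K, hK⟩]
    · intro m hm hmK
      have hmK' := Finset.mem_range_succ_iff.1 hm
      simp [hv ⟨m, hmK'.trans_lt hK⟩, hmK]
  have hlittle := (isLittleO_entrywiseForm_sub (u := u) (v := v) hf).mono
    (nhdsWithin_le_nhds (s := Ioi 0))
  simp only [hleading] at hlittle
  have hlimit : Tendsto (fun b => entrywiseForm u v f x b / b ^ K) (𝓝[>] 0)
      (𝓝 (iteratedDeriv K f x / K !)) := by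
    rw [← tendsto_sub_nhds_zero_iff]
    refine hlittle.tendsto_div_nhds_zero.congr' ?_
    filter_upwards [self_mem_nhdsWithin] with b (hb : 0 < b)
    field_simp
  have hnonneg : 0 ≤ iteratedDeriv K f x / K ! := by
    refine ge_of_tendsto hlimit ?_
    filter_upwards [hform v, self_mem_nhdsWithin] with b hb (hb0 : 0 < b)
    positivity
  simpa using (le_div_iff₀ (by positivity)).1 hnonneg

theorem PreservesPosSemidefOn.iteratedDeriv_nonneg {N K : ℕ} (hK : K < N) {u : Fin N → ℝ}
    (hu : Function.Injective u) (h : PreservesPosSemidefOn u S f) (hS : S ∈ 𝓝 x)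
    (hf : ContDiffAt ℝ K f x) : 0 ≤ iteratedDeriv K f x := by
  refine iteratedDeriv_nonneg_of_entrywiseForm_nonneg hK hu hf fun v => ?_
  have hshift : Tendsto (fun b => x + b) (𝓝[>] 0) (𝓝 x) := by
    simpa using ((continuous_const_add x).tendsto 0).mono_left nhdsWithin_le_nhds
  filter_upwards [self_mem_nhdsWithin, hshift hS] with b (hb : 0 < b) hxb
  exact posSemidef_entrywiseMatrix_iff.1 (h x (mem_of_mem_nhds hS) b hb.le hxb) v

end QuadraticForm

section Mollification
open MeasureTheory ContinuousLinearMap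
open scoped Convolution

variable {ι : Type*} {u v : ι → ℝ} {f k : ℝ → ℝ} {a b : ℝ} {S T : Set ℝ}

theorem entrywiseForm_convolution [Fintype ι] (hk : Continuous k) (hsupp : HasCompactSupport k)
    (hf : LocallyIntegrable f) :
    entrywiseForm u v (k ⋆[lsmul ℝ ℝ] f) a b = ∫ s, k s * entrywiseForm u v f (a - s) b := by
  have hint (y : ℝ) : Integrable fun s => k s * f (y - s) :=
    hsupp.convolutionExists_left (lsmul ℝ ℝ) hk hf y
  calc entrywiseForm u v (k ⋆[lsmul ℝ ℝ] f) a b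
      = ∑ p : ι × ι, v p.1 * v p.2 * ∫ s, k s * f (a + b * (u p.1 * u p.2) - s) := rfl
    _ = ∫ s, ∑ p : ι × ι, v p.1 * v p.2 * (k s * f (a + b * (u p.1 * u p.2) - s)) := by
        rw [integral_finsetSum _ fun p _ => (hint _).const_mul _]
        simp only [integral_const_mul]
    _ = ∫ s, k s * entrywiseForm u v f (a - s) b := by
        congr 1 with s
        rw [entrywiseForm, Finset.mul_sum]
        refine Finset.sum_congr rfl fun p _ => ?_
        rw [sub_add_eq_add_sub]
        ring

theorem PreservesPosSemidefOn.convolution [Finite ι] (h : PreservesPosSemidefOn u T f)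
    (hk : Continuous k) (hsupp : HasCompactSupport k) (hnonneg : ∀ s, 0 ≤ k s)
    (hf : LocallyIntegrable f) (hST : ∀ a ∈ S, ∀ s, k s ≠ 0 → a - s ∈ T) :
    PreservesPosSemidefOn u S (k ⋆[lsmul ℝ ℝ] f) := by
  have := Fintype.ofFinite ι
  refine fun a ha b hb hab => posSemidef_entrywiseMatrix_iff.2 fun v => ?_
  rw [entrywiseForm_convolution hk hsupp hf]
  refine integral_nonneg fun s => ?_
  by_cases hs : k s = 0
  · simp [hs]
  · have hshift : a - s + b ∈ T := sub_add_eq_add_sub a s b ▸ hST (a + b) hab s hs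
    exact mul_nonneg (hnonneg s)
      (posSemidef_entrywiseMatrix_iff.1 (h (a - s) (hST a ha s hs) b hb hshift) v)

end Mollification

section IteratedDifferences

variable {S T : Set ℝ} {f : ℝ → ℝ} {n : ℕ}

/-- `f` is nonnegative, non-decreasing and convex on `S`: the derivative-free form of
nonnegativity of the derivatives of order at most two. -/
structure NonnegMonotoneConvexOn (S : Set ℝ) (f : ℝ → ℝ) : Prop where
  nonneg : ∀ x ∈ S, 0 ≤ f x
  monotoneOn : MonotoneOn f S
  convexOn : ConvexOn ℝ S f

/-- Every iterated forward difference of `f` with at most `n` positive steps is nonnegative,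
non-decreasing and convex where it is defined. This is the derivative-free counterpart of
nonnegativity of the first `n + 2` derivatives; unlike the latter it passes to pointwise limits. -/
def DifferencesConvexOn : ℕ → Set ℝ → (ℝ → ℝ) → Prop
  | 0, S, f => NonnegMonotoneConvexOn S f
  | n + 1, S, f => NonnegMonotoneConvexOn S f ∧
      ∀ h, 0 < h → DifferencesConvexOn n (S ∩ (· + h) ⁻¹' S) (Δ_[h] f)

theorem ordConnected_inter_preimage_add_const (hS : S.OrdConnected) (h : ℝ) :
    (S ∩ (· + h) ⁻¹' S).OrdConnected :=
  hS.inter (hS.preimage_mono fun _ _ hxy => by gcongr)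

namespace NonnegMonotoneConvexOn

theorem mono (hf : NonnegMonotoneConvexOn S f) (hT : T.OrdConnected) (hTS : T ⊆ S) :
    NonnegMonotoneConvexOn T f :=
  ⟨fun x hx => hf.nonneg x (hTS hx), hf.monotoneOn.mono hTS, hf.convexOn.subset hTS hT.convex⟩

theorem congr {g : ℝ → ℝ} (hf : NonnegMonotoneConvexOn S f) (hfg : EqOn f g S) :
    NonnegMonotoneConvexOn S g :=
  ⟨fun x hx => hfg hx ▸ hf.nonneg x hx, hf.monotoneOn.congr hfg, hf.convexOn.congr hfg⟩

theorem const_smul {r : ℝ} (hr : 0 ≤ r) (hf : NonnegMonotoneConvexOn S f) :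
    NonnegMonotoneConvexOn S (r • f) :=
  ⟨fun x hx => mul_nonneg hr (hf.nonneg x hx),
    fun _ hx _ hy hxy => mul_le_mul_of_nonneg_left (hf.monotoneOn hx hy hxy) hr,
    hf.convexOn.smul hr⟩

theorem of_tendsto {α : Type*} {l : Filter α} [l.NeBot] {g : α → ℝ → ℝ} (hS : S.OrdConnected)
    (hg : ∀ᶠ i in l, NonnegMonotoneConvexOn S (g i))
    (hlim : ∀ x ∈ S, Tendsto (g · x) l (𝓝 (f x))) : NonnegMonotoneConvexOn S f where
  nonneg x hx := ge_of_tendsto (hlim x hx) (hg.mono fun _ hi => hi.nonneg x hx)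
  monotoneOn x hx y hy hxy := le_of_tendsto_of_tendsto (hlim x hx) (hlim y hy)
    (hg.mono fun _ hi => hi.monotoneOn hx hy hxy)
  convexOn := ⟨hS.convex, fun x hx y hy a b ha hb hab =>
    le_of_tendsto_of_tendsto (hlim _ (hS.convex hx hy ha hb hab))
      (((hlim x hx).const_smul a).add ((hlim y hy).const_smul b))
      (hg.mono fun _ hi => hi.convexOn.2 hx hy ha hb hab)⟩

theorem of_forall_Icc (hS : S.OrdConnected)
    (hf : ∀ c ∈ S, ∀ d ∈ S, c ≤ d → NonnegMonotoneConvexOn (Icc c d) f) :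
    NonnegMonotoneConvexOn S f where
  nonneg x hx := (hf x hx x hx le_rfl).nonneg x (by simp)
  monotoneOn x hx y hy hxy := (hf x hx y hy hxy).monotoneOn ⟨le_rfl, hxy⟩ ⟨hxy, le_rfl⟩ hxy
  convexOn := by
    refine ⟨hS.convex, fun x hx y hy a b ha hb hab => ?_⟩
    have hmin : min x y ∈ S := by rcases min_choice x y with h | h <;> rwa [h]
    have hmax : max x y ∈ S := by rcases max_choice x y with h | h <;> rwa [h]
    exact (hf _ hmin _ hmax min_le_max).convexOn.2 left_mem_uIcc right_mem_uIcc ha hb hab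

end NonnegMonotoneConvexOn

namespace DifferencesConvexOn

theorem nonnegMonotoneConvexOn (hf : DifferencesConvexOn n S f) : NonnegMonotoneConvexOn S f := by
  cases n with
  | zero => exact hf
  | succ n => exact hf.1

theorem mono (hf : DifferencesConvexOn n S f) (hT : T.OrdConnected) (hTS : T ⊆ S) :
    DifferencesConvexOn n T f := by
  induction n generalizing S T f with
  | zero => exact NonnegMonotoneConvexOn.mono hf hT hTS
  | succ n ih =>
    exact ⟨hf.1.mono hT hTS, fun h hh => ih (hf.2 h hh) (ordConnected_inter_preimage_add_const hT h)
      (inter_subset_inter hTS (preimage_mono hTS))⟩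

theorem congr {g : ℝ → ℝ} (hf : DifferencesConvexOn n S f) (hfg : EqOn f g S) :
    DifferencesConvexOn n S g := by
  induction n generalizing S f g with
  | zero => exact NonnegMonotoneConvexOn.congr hf hfg
  | succ n ih =>
    exact ⟨hf.1.congr hfg, fun h hh => ih (hf.2 h hh) fun _ hx =>
      congr_arg₂ (· - ·) (hfg hx.2) (hfg hx.1)⟩

theorem const_smul {r : ℝ} (hr : 0 ≤ r) (hf : DifferencesConvexOn n S f) :
    DifferencesConvexOn n S (r • f) := by
  induction n generalizing S f with
  | zero => exact NonnegMonotoneConvexOn.const_smul hr hf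
  | succ n ih =>
    exact ⟨hf.1.const_smul hr, fun h hh => fwdDiff_const_smul h r f ▸ ih (hf.2 h hh)⟩

theorem of_tendsto {α : Type*} {l : Filter α} [l.NeBot] {g : α → ℝ → ℝ} (hS : S.OrdConnected)
    (hg : ∀ᶠ i in l, DifferencesConvexOn n S (g i))
    (hlim : ∀ x ∈ S, Tendsto (g · x) l (𝓝 (f x))) : DifferencesConvexOn n S f := by
  induction n generalizing S f g with
  | zero => exact NonnegMonotoneConvexOn.of_tendsto hS hg hlim
  | succ n ih =>
    exact ⟨.of_tendsto hS (hg.mono fun _ hi => hi.1) hlim, fun h hh =>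
      ih (ordConnected_inter_preimage_add_const hS h) (hg.mono fun _ hi => hi.2 h hh)
        fun x hx => (hlim (x + h) hx.2).sub (hlim x hx.1)⟩

theorem of_forall_Icc (hS : S.OrdConnected)
    (hf : ∀ c ∈ S, ∀ d ∈ S, c ≤ d → DifferencesConvexOn n (Icc c d) f) :
    DifferencesConvexOn n S f := by
  induction n generalizing S f with
  | zero => exact NonnegMonotoneConvexOn.of_forall_Icc hS hf
  | succ n ih =>
    refine ⟨.of_forall_Icc hS fun c hc d hd hcd => (hf c hc d hd hcd).1, fun h hh => ?_⟩
    refine ih (ordConnected_inter_preimage_add_const hS h) fun c hc d hd hcd => ?_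
    refine ((hf c hc.1 (d + h) hd.2 (by linarith)).2 h hh).mono ordConnected_Icc fun x hx => ?_
    exact ⟨⟨hx.1, by linarith [hx.2]⟩, by linarith [hx.1], by linarith [hx.2]⟩

end DifferencesConvexOn

theorem monotoneOn_iteratedDeriv_of_nonneg (hS : S.OrdConnected) {k : ℕ}
    (hf : ContDiff ℝ (k + 1 : ℕ) f) (hnonneg : ∀ x ∈ S, 0 ≤ iteratedDeriv (k + 1) f x) :
    MonotoneOn (iteratedDeriv k f) S := by
  have hdiff : Differentiable ℝ (iteratedDeriv k f) :=
    hf.differentiable_iteratedDeriv k (by exact_mod_cast k.lt_succ_self)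
  refine monotoneOn_of_deriv_nonneg hS.convex hdiff.continuous.continuousOn
    hdiff.differentiableOn fun x hx => ?_
  simpa only [iteratedDeriv_succ] using hnonneg x (interior_subset hx)

theorem nonnegMonotoneConvexOn_of_iteratedDeriv_nonneg (hS : S.OrdConnected)
    (hf : ContDiff ℝ 2 f) (hnonneg : ∀ k ≤ 2, ∀ x ∈ S, 0 ≤ iteratedDeriv k f x) :
    NonnegMonotoneConvexOn S f where
  nonneg x hx := by simpa using hnonneg 0 (by simp) x hx
  monotoneOn := by
    simpa using monotoneOn_iteratedDeriv_of_nonneg (k := 0) hS (hf.of_le (by norm_num))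
      (hnonneg 1 (by simp))
  convexOn := by
    have hdiff : Differentiable ℝ f := hf.differentiable (by norm_num)
    have hderiv : MonotoneOn (deriv f) S := by
      simpa using monotoneOn_iteratedDeriv_of_nonneg (k := 1) hS hf (hnonneg 2 le_rfl)
    exact (hderiv.mono interior_subset).convexOn_of_deriv hS.convex
      hdiff.continuous.continuousOn hdiff.differentiableOn

theorem iteratedDeriv_fwdDiff {k : ℕ} (hf : ContDiff ℝ k f) (h : ℝ) :
    iteratedDeriv k (Δ_[h] f) = Δ_[h] (iteratedDeriv k f) := by
  ext x
  have hshift : ContDiff ℝ k fun y => f (y + h) := hf.comp (contDiff_id.add contDiff_const)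
  have hsub := iteratedDeriv_fun_sub (x := x) hshift.contDiffAt hf.contDiffAt
  rwa [iteratedDeriv_comp_add_const] at hsub

theorem differencesConvexOn_of_iteratedDeriv_nonneg (hS : S.OrdConnected)
    (hf : ContDiff ℝ (n + 2 : ℕ) f) (hnonneg : ∀ k ≤ n + 2, ∀ x ∈ S, 0 ≤ iteratedDeriv k f x) :
    DifferencesConvexOn n S f := by
  induction n generalizing S f with
  | zero => exact nonnegMonotoneConvexOn_of_iteratedDeriv_nonneg hS hf hnonneg
  | succ n ih =>
    have hof {k : ℕ} (hk : k ≤ n + 1 + 2) : ContDiff ℝ k f := hf.of_le (by exact_mod_cast hk)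
    refine ⟨nonnegMonotoneConvexOn_of_iteratedDeriv_nonneg hS (hof (k := 2) (by omega))
      fun k hk => hnonneg k (by omega), fun h hh => ?_⟩
    refine ih (ordConnected_inter_preimage_add_const hS h) ?_ fun k hk x hx => ?_
    · exact ((hof (by omega)).comp (contDiff_id.add contDiff_const)).sub (hof (by omega))
    · rw [iteratedDeriv_fwdDiff (hof (by omega)), fwdDiff, sub_nonneg]
      exact monotoneOn_iteratedDeriv_of_nonneg hS (hof (by omega)) (hnonneg (k + 1) (by omega))
        hx.1 hx.2 (by linarith)

end IteratedDifferences

section Regularity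

variable {S : Set ℝ} {f : ℝ → ℝ} {n : ℕ} {x : ℝ}

theorem hasDerivAt_rightDeriv_of_continuousAt (hf : ConvexOn ℝ S f) (hx : x ∈ interior S)
    (hcont : ContinuousAt (fun y => derivWithin f (Ioi y) y) x) :
    HasDerivAt f (derivWithin f (Ioi x) x) x := by
  have hleft : HasDerivWithinAt f (derivWithin f (Ioi x) x) (Iio x) x := by
    rw [hasDerivWithinAt_iff_tendsto_slope' (by simp)]
    have hnhds : ∀ᶠ y in 𝓝[<] x, y < x ∧ y ∈ interior S :=
      eventually_mem_nhdsWithin.and (mem_nhdsWithin_of_mem_nhds (isOpen_interior.mem_nhds hx))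
    refine tendsto_of_tendsto_of_tendsto_of_le_of_le' (hcont.tendsto.mono_left nhdsWithin_le_nhds)
      tendsto_const_nhds ?_ ?_
    · filter_upwards [hnhds] with y ⟨hyx, hy⟩
      rw [slope_comm]
      exact hf.rightDeriv_le_slope_of_mem_interior hy (interior_subset hx) hyx
    · filter_upwards [hnhds] with y ⟨hyx, hy⟩
      rw [slope_comm]
      exact (hf.slope_le_leftDeriv_of_mem_interior (interior_subset hy) hx hyx).trans
        (hf.leftDeriv_le_rightDeriv_of_mem_interior hx)
  have hright := hf.hasDerivWithinAt_rightDeriv_of_mem_interior hx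
  have hunion :=
    (hasDerivWithinAt_Iio_iff_Iic.1 hleft).union (hasDerivWithinAt_Ioi_iff_Ici.1 hright)
  rwa [Iic_union_Ici, hasDerivWithinAt_univ] at hunion

theorem tendsto_smul_fwdDiff_of_hasDerivWithinAt {f' : ℝ} (hf : HasDerivWithinAt f f' (Ioi x) x) :
    Tendsto (fun t : ℝ => (t⁻¹ • Δ_[t] f) x) (𝓝[>] 0) (𝓝 f') := by
  have hzero : Tendsto (fun t => x + t) (𝓝[>] 0) (𝓝[>] x) := by
    simpa using tendsto_map (f := fun t => x + t) (x := 𝓝[>] (0 : ℝ))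
  refine (((hasDerivWithinAt_iff_tendsto_slope' (by simp)).1 hf).comp hzero).congr fun t => ?_
  simp [slope_def_field, fwdDiff, div_eq_inv_mul]

namespace DifferencesConvexOn

theorem rightDeriv (hS : IsOpen S) (hf : DifferencesConvexOn (n + 1) S f) :
    DifferencesConvexOn n S fun x => derivWithin f (Ioi x) x := by
  have hconn : S.OrdConnected := hf.1.convexOn.1.ordConnected
  refine of_forall_Icc hconn fun c hc d hd _ => ?_
  refine of_tendsto (l := 𝓝[>] (0 : ℝ)) (g := fun t => t⁻¹ • Δ_[t] f) ordConnected_Icc ?_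
    fun x hx => tendsto_smul_fwdDiff_of_hasDerivWithinAt ?_
  · have hshift : Tendsto (fun t => d + t) (𝓝[>] 0) (𝓝 d) := by
      simpa using ((continuous_const_add d).tendsto 0).mono_left nhdsWithin_le_nhds
    filter_upwards [self_mem_nhdsWithin, hshift (hS.mem_nhds hd)] with t (ht : 0 < t) hdt
    refine ((hf.2 t ht).mono ordConnected_Icc fun x hx => ?_).const_smul (inv_nonneg.2 ht.le)
    exact ⟨hconn.out hc hd hx, hconn.out hc hdt ⟨by linarith [hx.1], by linarith [hx.2]⟩⟩
  · exact hf.1.convexOn.hasDerivWithinAt_rightDeriv_of_mem_interior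
      (hS.interior_eq.symm ▸ hconn.out hc hd hx)

theorem hasDerivAt (hS : IsOpen S) (hf : DifferencesConvexOn (n + 1) S f) (hx : x ∈ S) :
    HasDerivAt f (derivWithin f (Ioi x) x) x :=
  hasDerivAt_rightDeriv_of_continuousAt hf.1.convexOn (hS.interior_eq.symm ▸ hx) <|
    ((hf.rightDeriv hS).nonnegMonotoneConvexOn.convexOn.continuousOn hS).continuousAt
      (hS.mem_nhds hx)

theorem deriv (hS : IsOpen S) (hf : DifferencesConvexOn (n + 1) S f) :
    DifferencesConvexOn n S (deriv f) :=
  (hf.rightDeriv hS).congr fun _ hx => (hf.hasDerivAt hS hx).deriv.symm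

theorem contDiffOn (hS : IsOpen S) (hf : DifferencesConvexOn n S f) : ContDiffOn ℝ n f S := by
  induction n generalizing f with
  | zero => exact contDiffOn_zero.2 (hf.nonnegMonotoneConvexOn.convexOn.continuousOn hS)
  | succ n ih =>
    rw [Nat.cast_succ, contDiffOn_succ_iff_deriv_of_isOpen hS]
    exact ⟨fun x hx => (hf.hasDerivAt hS hx).differentiableAt.differentiableWithinAt, by simp,
      ih (hf.deriv hS)⟩

theorem iteratedDeriv (hS : IsOpen S) (hf : DifferencesConvexOn n S f) {k : ℕ} (hk : k ≤ n) :
    NonnegMonotoneConvexOn S (iteratedDeriv k f) := by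
  induction k generalizing n f with
  | zero => simpa using hf.nonnegMonotoneConvexOn
  | succ k ih =>
    obtain ⟨m, rfl⟩ : ∃ m, n = m + 1 := ⟨n - 1, by omega⟩
    rw [iteratedDeriv_succ']
    exact ih (hf.deriv hS) (by omega)

end DifferencesConvexOn

end Regularity

section ContinuousPreservers
open MeasureTheory ContinuousLinearMap
open scoped Convolution

variable {S : Set ℝ} {F : ℝ → ℝ} {n : ℕ}

theorem exists_contDiffBump_rOut_tendsto_zero :
    ∃ φ : ℕ → ContDiffBump (0 : ℝ), Tendsto (fun m => (φ m).rOut) atTop (𝓝 0) :=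
  ⟨fun m => ⟨1 / (m + 1) / 2, 1 / (m + 1), by positivity, half_lt_self (by positivity)⟩,
    tendsto_one_div_add_atTop_nhds_zero_nat⟩

theorem PreservesPosSemidefOn.differencesConvexOn_Icc {c d ε : ℝ} {u : Fin (n + 3) → ℝ}
    (hu : Function.Injective u) (hF : Continuous F) (hε : 0 < ε)
    (h : PreservesPosSemidefOn u (Icc (c - ε) (d + ε)) F) : DifferencesConvexOn n (Icc c d) F := by
  obtain ⟨φ, hφ⟩ := exists_contDiffBump_rOut_tendsto_zero
  refine .of_tendsto ordConnected_Icc (l := atTop)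
    (g := fun m => (φ m).normed volume ⋆[lsmul ℝ ℝ] F) ?_
    fun x _ => ContDiffBump.convolution_tendsto_right_of_continuous hφ hF x
  filter_upwards [hφ.eventually_lt_const (half_pos hε)] with m hm
  have hsmooth : ContDiff ℝ (n + 2 : ℕ) ((φ m).normed volume ⋆[lsmul ℝ ℝ] F) :=
    (φ m).hasCompactSupport_normed.contDiff_convolution_left _ (φ m).contDiff_normed
      hF.locallyIntegrable
  have hpreserves : PreservesPosSemidefOn u (Ioo (c - ε / 2) (d + ε / 2))
      ((φ m).normed volume ⋆[lsmul ℝ ℝ] F) := by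
    refine h.convolution (φ m).continuous_normed (φ m).hasCompactSupport_normed
      (φ m).nonneg_normed hF.locallyIntegrable fun a ha s hs => ?_
    have hs' : s ∈ Metric.ball 0 (φ m).rOut := (φ m).support_normed_eq (μ := volume) ▸ hs
    rw [mem_ball_zero_iff, Real.norm_eq_abs, abs_lt] at hs'
    constructor <;> linarith [ha.1, ha.2]
  refine differencesConvexOn_of_iteratedDeriv_nonneg ordConnected_Icc hsmooth fun k hk x hx => ?_
  exact hpreserves.iteratedDeriv_nonneg (by omega) hu
    (Ioo_mem_nhds (by linarith [hx.1]) (by linarith [hx.2]))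
    (hsmooth.of_le (by exact_mod_cast hk)).contDiffAt

theorem exists_Icc_subset_of_isOpen {c d : ℝ} (hS : IsOpen S) (hconn : S.OrdConnected) (hc : c ∈ S)
    (hd : d ∈ S) : ∃ ε > 0, Icc (c - ε) (d + ε) ⊆ S := by
  obtain ⟨δ, hδ, hcδ⟩ := Metric.isOpen_iff.1 hS c hc
  obtain ⟨η, hη, hdη⟩ := Metric.isOpen_iff.1 hS d hd
  refine ⟨min δ η / 2, by positivity, hconn.out (hcδ ?_) (hdη ?_)⟩
  all_goals
    rw [Metric.mem_ball, Real.dist_eq, abs_lt]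
    constructor <;> linarith [min_le_left δ η, min_le_right δ η, lt_min hδ hη]

theorem PreservesPosSemidefOn.differencesConvexOn {u : Fin (n + 3) → ℝ} (hS : IsOpen S)
    (hconn : S.OrdConnected) (hu : Function.Injective u) (hu01 : ∀ i, u i ∈ Icc 0 1)
    (hF : ContinuousOn F S) (h : PreservesPosSemidefOn u S F) : DifferencesConvexOn n S F := by
  refine .of_forall_Icc hconn fun c hc d hd hcd => ?_
  obtain ⟨ε, hε, hsub⟩ := exists_Icc_subset_of_isOpen hS hconn hc hd
  have hle : c - ε ≤ d + ε := by linarith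
  have hext : EqOn F (IccExtend hle ((Icc (c - ε) (d + ε)).domRestrict F)) (Icc (c - ε) (d + ε)) :=
    fun x hx => (IccExtend_of_mem hle ((Icc (c - ε) (d + ε)).domRestrict F) hx).symm
  have hdiff := ((h.mono hsub).congr ordConnected_Icc hu01 hext).differencesConvexOn_Icc hu
    (hF.mono hsub).domRestrict.Icc_extend' hε
  exact hdiff.congr (hext.symm.mono (Icc_subset_Icc (by linarith) (by linarith)))

end ContinuousPreservers

section TwoByTwo

variable {S : Set ℝ} {F : ℝ → ℝ}

theorem posSemidef_fin_two_of_sq_le {p q r : ℝ} (hp : 0 < p) (h : q ^ 2 ≤ p * r) :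
    !![p, q; q, r].PosSemidef := by
  refine Matrix.PosSemidef.of_dotProduct_mulVec_nonneg ?_ fun x => ?_
  · ext i j; fin_cases i <;> fin_cases j <;> simp
  · have hsquares : p * (star x ⬝ᵥ !![p, q; q, r] *ᵥ x) =
        (p * x 0 + q * x 1) ^ 2 + (p * r - q ^ 2) * x 1 ^ 2 := by
      simp only [dotProduct, Pi.star_apply, star_trivial, Matrix.cons_mulVec, Fin.sum_univ_two,
        Matrix.cons_val_zero, Matrix.cons_val_one, Matrix.cons_val_fin_one, Matrix.empty_mulVec]
      ring
    refine nonneg_of_mul_nonneg_right (hsquares ▸ ?_) hp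
    exact add_nonneg (sq_nonneg _) (mul_nonneg (sub_nonneg.2 h) (sq_nonneg _))

theorem posSemidef_map_fin_two {p q r : ℝ} (hS : S ⊆ Ioi 0)
    (hF : ∀ A : Matrix (Fin 2) (Fin 2) ℝ, A.PosSemidef → (∀ i j, A i j ∈ S) → (A.map F).PosSemidef)
    (hp : p ∈ S) (hq : q ∈ S) (hr : r ∈ S) (h : q ^ 2 ≤ p * r) :
    !![F p, F q; F q, F r].PosSemidef := by
  have hmap := hF !![p, q; q, r] (posSemidef_fin_two_of_sq_le (hS hp) h)
    (by simp [Fin.forall_fin_two, hp, hq, hr])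
  convert hmap using 1
  ext i j; fin_cases i <;> fin_cases j <;> rfl

theorem exists_tendsto_nhdsLT_nhdsGT_of_monotoneOn {p : ℝ} (hF : MonotoneOn F S) (hS : S ∈ 𝓝 p) :
    ∃ L R, L ≤ F p ∧ F p ≤ R ∧ Tendsto F (𝓝[<] p) (𝓝 L) ∧ Tendsto F (𝓝[>] p) (𝓝 R) := by
  obtain ⟨c, d, hp, hcd⟩ := mem_nhds_iff_exists_Ioo_subset.1 hS
  have hpS : p ∈ S := hcd hp
  have hleft : Ioo c p ⊆ S := (Ioo_subset_Ioo_right hp.2.le).trans hcd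
  have hright : Ioo p d ⊆ S := (Ioo_subset_Ioo_left hp.1.le).trans hcd
  have hupper : F p ∈ upperBounds (F '' Ioo c p) :=
    forall_mem_image.2 fun x hx => hF (hleft hx) hpS hx.2.le
  have hlower : F p ∈ lowerBounds (F '' Ioo p d) :=
    forall_mem_image.2 fun x hx => hF hpS (hright hx) hx.1.le
  exact ⟨_, _, csSup_le ((nonempty_Ioo.2 hp.1).image F) hupper,
    le_csInf ((nonempty_Ioo.2 hp.2).image F) hlower,
    (hF.mono hleft).tendsto_nhdsWithin_Ioo_left (nonempty_Ioo.2 hp.1) ⟨_, hupper⟩,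
    (hF.mono hright).tendsto_nhdsWithin_Ioo_right (nonempty_Ioo.2 hp.2) ⟨_, hlower⟩⟩

theorem continuousAt_of_monotoneOn_of_sq_le_mul {p : ℝ} (hp : 0 < p) (hS : S ∈ 𝓝 p)
    (hmono : MonotoneOn F S) (hnonneg : ∀ x ∈ S, 0 ≤ F x)
    (hsq : ∀ x ∈ S, ∀ y ∈ S, ∀ z ∈ S, y ^ 2 = x * z → F y ^ 2 ≤ F x * F z) :
    ContinuousAt F p := by
  obtain ⟨L, R, hL, hR, hleft, hright⟩ := exists_tendsto_nhdsLT_nhdsGT_of_monotoneOn hmono hS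
  have hbelow : Tendsto (fun s => p * s⁻¹) (𝓝[>] 1) (𝓝[<] p) := by
    refine tendsto_nhdsWithin_iff.2 ⟨?_, ?_⟩
    · have hcont : ContinuousAt (fun s : ℝ => p * s⁻¹) 1 := by fun_prop (disch := norm_num)
      simpa using hcont.tendsto.mono_left nhdsWithin_le_nhds
    · filter_upwards [self_mem_nhdsWithin] with s (hs : 1 < s)
      exact mul_lt_of_lt_one_right hp (inv_lt_one_of_one_lt₀ hs)
  have habove {k : ℕ} (hk : k ≠ 0) : Tendsto (fun s => p * s ^ k) (𝓝[>] 1) (𝓝[>] p) := by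
    refine tendsto_nhdsWithin_iff.2 ⟨?_, ?_⟩
    · have hcont : Continuous fun s : ℝ => p * s ^ k := by fun_prop
      simpa using (hcont.tendsto 1).mono_left nhdsWithin_le_nhds
    · filter_upwards [self_mem_nhdsWithin] with s (hs : 1 < s)
      exact lt_mul_of_one_lt_right hp (one_lt_pow₀ hs hk)
  -- `p * s` is the geometric mean of `p / s < p` and `p * s ^ 3 > p`; let `s → 1⁺`.
  have hjump : R ^ 2 ≤ L * R := by
    refine le_of_tendsto_of_tendsto ((hright.comp (habove one_ne_zero)).pow 2)
      ((hleft.comp hbelow).mul (hright.comp (habove three_ne_zero))) ?_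
    filter_upwards [hbelow (mem_nhdsWithin_of_mem_nhds hS),
      habove one_ne_zero (mem_nhdsWithin_of_mem_nhds hS),
      habove three_ne_zero (mem_nhdsWithin_of_mem_nhds hS), self_mem_nhdsWithin]
      with s hx hy hz (hs : 1 < s)
    exact hsq _ hx _ hy _ hz (by field_simp)
  have hF0 : 0 ≤ F p := hnonneg p (mem_of_mem_nhds hS)
  have hL0 : 0 ≤ L := ge_of_tendsto hleft <|
    Eventually.mono (mem_nhdsWithin_of_mem_nhds hS) hnonneg
  have hRL : R ≤ L := by nlinarith
  rw [continuousAt_iff_continuous_left'_right']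
  obtain rfl : L = F p := le_antisymm hL (hR.trans hRL)
  obtain rfl : R = F p := le_antisymm hRL hR
  exact ⟨hleft, hright⟩

theorem continuousOn_of_preserves_posSemidef_fin_two (hS : IsOpen S) (hpos : S ⊆ Ioi 0)
    (hF : ∀ A : Matrix (Fin 2) (Fin 2) ℝ, A.PosSemidef → (∀ i j, A i j ∈ S) →
      (A.map F).PosSemidef) :
    ContinuousOn F S := by
  have hsq : ∀ x ∈ S, ∀ y ∈ S, ∀ z ∈ S, y ^ 2 ≤ x * z → F y ^ 2 ≤ F x * F z := by
    intro x hx y hy z hz hyxz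
    have hdet := (posSemidef_map_fin_two hpos hF hx hy hz hyxz).det_nonneg
    rw [Matrix.det_fin_two_of] at hdet
    linarith
  have hnonneg : ∀ x ∈ S, 0 ≤ F x := fun x hx =>
    (posSemidef_map_fin_two hpos hF hx hx hx (sq x).le).diag_nonneg (i := 0)
  have hmono : MonotoneOn F S := fun x hx y hy hxy => by
    have hx0 : 0 < x := hpos hx
    exact le_of_sq_le_sq ((hsq y hy x hx y hy (by nlinarith)).trans_eq (sq _).symm) (hnonneg y hy)
  exact fun p hp => (continuousAt_of_monotoneOn_of_sq_le_mul (hpos hp) (hS.mem_nhds hp) hmono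
    hnonneg fun x hx y hy z hz hyxz => hsq x hx y hy z hz hyxz.le).continuousWithinAt

end TwoByTwo

theorem isOpen_openSeg (ρ : ℝ≥0∞) : IsOpen (openSeg ρ) :=
  isOpen_Ioi.inter (isOpen_Iio.preimage ENNReal.continuous_ofReal)

theorem ordConnected_openSeg (ρ : ℝ≥0∞) : (openSeg ρ).OrdConnected :=
  ordConnected_Ioi.inter (ordConnected_Iio.preimage_mono fun _ _ => ENNReal.ofReal_le_ofReal)

theorem horn_hankel_general {S : Set ℝ} (hS : IsOpen S) (hconn : S.OrdConnected) {N : ℕ}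
    (hN : 3 ≤ N) {u : Fin N → ℝ} (hu : Function.Injective u) (hu01 : ∀ i, u i ∈ Icc 0 1)
    {F : ℝ → ℝ} (hF : ContinuousOn F S)
    (h : ∀ a ∈ S, ∀ b, 0 ≤ b → a + b ∈ S →
      (Matrix.of fun i j : Fin N => F (a + b * (u i * u j))).PosSemidef) :
    ContDiffOn ℝ (N - 3 : ℕ) F S ∧
    (∀ k ≤ N - 3, ∀ x ∈ S, 0 ≤ iteratedDerivWithin k F S x) ∧
    ConvexOn ℝ S (iteratedDerivWithin (N - 3) F S) ∧
    MonotoneOn (iteratedDerivWithin (N - 3) F S) S ∧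
    (ContDiffOn ℝ (N - 1 : ℕ) F S → ∀ k ≤ N - 1, ∀ x ∈ S, 0 ≤ iteratedDerivWithin k F S x) := by
  obtain ⟨n, rfl⟩ : ∃ n, N = n + 3 := ⟨N - 3, by omega⟩
  replace h : PreservesPosSemidefOn u S F := h
  have hdiff : DifferencesConvexOn n S F := h.differencesConvexOn hS hconn hu hu01 hF
  have heq (k : ℕ) : EqOn (iteratedDerivWithin k F S) (iteratedDeriv k F) S :=
    iteratedDerivWithin_of_isOpen hS
  have hderiv {k : ℕ} (hk : k ≤ n) : NonnegMonotoneConvexOn S (iteratedDerivWithin k F S) :=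
    (hdiff.iteratedDeriv hS hk).congr (heq k).symm
  refine ⟨hdiff.contDiffOn hS, fun k hk => (hderiv hk).nonneg, (hderiv le_rfl).convexOn,
    (hderiv le_rfl).monotoneOn, fun hsmooth k hk x hx => ?_⟩
  rw [heq k hx]
  exact h.iteratedDeriv_nonneg (by omega) hu (hS.mem_nhds hx)
    ((hsmooth.of_le (by exact_mod_cast hk)).contDiffAt (hS.mem_nhds hx))

/-- Horn-type theorem for preservers of positivity on a family of Hankel matrices
`a 𝟏 + b uuᵀ`, with `u = (1, u₀, …, u₀^{N-1})ᵀ`. -/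
theorem horn_hankel (ρ : ℝ≥0∞) (hρ : 0 < ρ) (u₀ : ℝ) (hu₀ : u₀ ∈ Set.Ioo (0 : ℝ) 1)
    (N : ℕ) (hN : 3 ≤ N) (F : ℝ → ℝ)
    (hHankel : ∀ a b : ℝ, 0 ≤ a → 0 ≤ b → 0 < a + b → ENNReal.ofReal (a + b) < ρ →
      (Matrix.of fun i j : Fin N =>
        F (a + b * (u₀ ^ (i : ℕ) * u₀ ^ (j : ℕ)))).PosSemidef)
    (h2 : (∀ A : Matrix (Fin 2) (Fin 2) ℝ, A.PosSemidef → (∀ i j, A i j ∈ openSeg ρ) →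
        (A.map F).PosSemidef) ∨ ContinuousOn F (openSeg ρ)) :
    ContDiffOn ℝ (N - 3 : ℕ) F (openSeg ρ) ∧
    (∀ k ≤ N - 3, ∀ x ∈ openSeg ρ, 0 ≤ iteratedDerivWithin k F (openSeg ρ) x) ∧
    ConvexOn ℝ (openSeg ρ) (iteratedDerivWithin (N - 3) F (openSeg ρ)) ∧
    MonotoneOn (iteratedDerivWithin (N - 3) F (openSeg ρ)) (openSeg ρ) ∧
    (ContDiffOn ℝ (N - 1 : ℕ) F (openSeg ρ) →
      ∀ k ≤ N - 1, ∀ x ∈ openSeg ρ, 0 ≤ iteratedDerivWithin k F (openSeg ρ) x) := by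
  have hu_injective : Function.Injective fun i : Fin N => u₀ ^ (i : ℕ) :=
    (pow_right_injective₀ hu₀.1 hu₀.2.ne).comp Fin.val_injective
  have hu_mem (i : Fin N) : u₀ ^ (i : ℕ) ∈ Icc 0 1 :=
    ⟨pow_nonneg hu₀.1.le _, pow_le_one₀ hu₀.1.le hu₀.2.le⟩
  have hcont : ContinuousOn F (openSeg ρ) :=
    h2.elim (continuousOn_of_preserves_posSemidef_fin_two (isOpen_openSeg ρ) fun _ hx => hx.1) id
  exact horn_hankel_general (isOpen_openSeg ρ) (ordConnected_openSeg ρ) hN hu_injective hu_mem hcont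
    fun a ha b hb hab => hHankel a b ha.1.le hb hab.1 hab.2
end
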